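/- Let K be a Hopf subalgebra of H, let G be a subgroup of the group G(H) of grouplike elements of H, and let M be a finite-dimensional left K-module. Then there is a canonical isomorphism of kG-modules H ⊗_K M ≅ ⊕_{C ∈ kG\H/K} (kG ⊗_{kG_C} {}^C M), where G_C is the subgroup of G determined by kG ∩ {}^C K = kG_C; equivalently G_C = {g ∈ G | gCK = CK}. In particular (kG, K) is a Mackey pair of Hopf subalgebras of H. -/

import Mathlib

open TensorProduct

namespace MackeyPaper

noncomputable section

universe v

variable (k : Type) [Field k] [CharZero k] [IsAlgClosed k]
variable (H : Type) [Ring H] [HopfAlgebra k H]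

/-- A subcoalgebra of `H`: a `k`-subspace `C` with `Δ(C) ⊆ C ⊗ C`. -/
def IsSubcoalgebra (C : Submodule k H) : Prop :=
  ∀ c ∈ C, Coalgebra.comul (R := k) c ∈
    LinearMap.range (TensorProduct.map C.subtype C.subtype)

/-- A simple (nonzero, minimal) subcoalgebra of `H`. -/
def IsSimpleSubcoalgebra (C : Submodule k H) : Prop :=
  IsSubcoalgebra k H C ∧ C ≠ ⊥ ∧
    ∀ D : Submodule k H, D ≤ C → IsSubcoalgebra k H D → D ≠ ⊥ → D = C

/-- A Hopf subalgebra of `H`: a subalgebra which is a subcoalgebra and is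
stable under the antipode. -/
def IsHopfSubalgebra (K : Subalgebra k H) : Prop :=
  IsSubcoalgebra k H K.toSubmodule ∧ ∀ x ∈ K, HopfAlgebra.antipode (R := k) x ∈ K

/-- `Λ` is the (two-sided) idempotent integral of the Hopf subalgebra `K`,
i.e. the integral normalized by `ε(Λ) = 1`. -/
def IsIdempotentIntegral (K : Subalgebra k H) (Λ : H) : Prop :=
  Λ ∈ K ∧ Coalgebra.counit (R := k) Λ = 1 ∧
    ∀ x ∈ K, x * Λ = Coalgebra.counit (R := k) x • Λ ∧
      Λ * x = Coalgebra.counit (R := k) x • Λ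

/-- A cocommutative element of `H`; the cocommutative elements of `H` form
the character ring `C(H^*)`. -/
def IsCocomm (x : H) : Prop :=
  (TensorProduct.comm k H H) (Coalgebra.comul (R := k) x) = Coalgebra.comul (R := k) x

/-- The character ring `C(H^*)`, i.e. the space of cocommutative elements of `H`,
as a `k`-subspace of `H`. -/
def charRing : Submodule k H :=
  LinearMap.ker ((TensorProduct.comm k H H).toLinearMap ∘ₗ Coalgebra.comul (R := k)
      - Coalgebra.comul (R := k))

/-- `d` is the irreducible character (of `H^*`) associated to the simple
subcoalgebra `C`: the unique cocommutative element of `C` whose counit is the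
positive square root of `dim_k C`. -/
def IsCharacterOf (d : H) (C : Submodule k H) : Prop :=
  d ∈ C ∧ IsCocomm k H d ∧
    Coalgebra.counit (R := k) d = ((Nat.sqrt (Module.finrank k ↥C) : ℕ) : k)

/-- The right coset `CK` of a subcoalgebra `C`, i.e. the subspace `C·K`. -/
def CKsub (K : Subalgebra k H) (C : Submodule k H) : Submodule k H :=
  C * K.toSubmodule

/-- The conjugate Hopf subalgebra `ᶜK` of `K` by a simple subcoalgebra `C`
(with associated irreducible character `c`): the span of all simple
subcoalgebras of `H` whose irreducible character `d` satisfies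
`d·c·Λ_K = ε(d)·c·Λ_K`.  (The condition is stated for all cocommutative
elements of `C` resp. `D`; this is equivalent, since the cocommutative
elements of a simple subcoalgebra are exactly the scalar multiples of its
irreducible character.) -/
def conjK (K : Subalgebra k H) (Λ : H) (C : Submodule k H) : Submodule k H :=
  sSup {D : Submodule k H | IsSimpleSubcoalgebra k H D ∧
    ∀ d ∈ D, IsCocomm k H d → ∀ c ∈ C, IsCocomm k H c →
      d * (c * Λ) = Coalgebra.counit (R := k) d • (c * Λ)}

/-- A complete irredundant system of representatives (by simple subcoalgebras)
of the double cosets `L\H/K`.  (Taking `L = ⊥` gives a system of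
representatives of the right cosets `H/K`.) -/
def IsDoubleCosetReps (L K : Subalgebra k H) {ι : Type} (rep : ι → Submodule k H) : Prop :=
  (∀ i, IsSimpleSubcoalgebra k H (rep i)) ∧
  (∀ i j, L.toSubmodule * rep i * K.toSubmodule = L.toSubmodule * rep j * K.toSubmodule
      → i = j) ∧
  (∀ C : Submodule k H, IsSimpleSubcoalgebra k H C →
      ∃ i, C ≤ L.toSubmodule * rep i * K.toSubmodule)

section Ind

variable (K : Subalgebra k H) (M : Type v) [AddCommGroup M] [Module k M]
  [Module ↥K M] [IsScalarTower k ↥K M]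

/-- The relations defining the induced module `H ⊗_K M` as a quotient of
`H ⊗_k M`: the `H`-submodule generated by the elements `a ⊗ m - 1 ⊗ a·m`
for `a ∈ K` (equivalently, spanned by all `h·a ⊗ m - h ⊗ a·m`). -/
def indRel : Submodule H (H ⊗[k] M) :=
  Submodule.span H {z | ∃ (a : ↥K) (m : M),
    z = (a : H) ⊗ₜ[k] m - (1 : H) ⊗ₜ[k] (a • m)}

/-- The induced module `M↑_K^H = H ⊗_K M`, a left `H`-module. -/
abbrev Ind := (H ⊗[k] M) ⧸ indRel k H K M

variable (C : Submodule k H)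

/-- The underlying space `CK ⊗_k M` of which the conjugate module `ᶜM` is a
quotient. -/
def CKM : Type _ := ↥(CKsub k H K C) ⊗[k] M

instance : AddCommGroup (CKM k H K M C) :=
  inferInstanceAs (AddCommGroup (↥(CKsub k H K C) ⊗[k] M))

instance : Module k (CKM k H K M C) :=
  inferInstanceAs (Module k (↥(CKsub k H K C) ⊗[k] M))

/-- The pure tensor `x ⊗ m` as an element of `CK ⊗_k M`. -/
def ckmk (x : ↥(CKsub k H K C)) (m : M) : CKM k H K M C := x ⊗ₜ[k] m

/-- The relations defining the conjugate module `ᶜM = CK ⊗_K M` as a quotient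
of `CK ⊗_k M`: `x·a ⊗ m - x ⊗ a·m` for `a ∈ K`. -/
def conjRel : Submodule k (CKM k H K M C) :=
  Submodule.span k {z | ∃ (x : ↥(CKsub k H K C)) (a : ↥K) (m : M)
    (hxa : (x : H) * (a : H) ∈ CKsub k H K C),
    z = ckmk k H K M C ⟨(x : H) * (a : H), hxa⟩ m - ckmk k H K M C x (a • m)}

/-- The conjugate module `ᶜM := CK ⊗_K M`. -/
abbrev ConjM := CKM k H K M C ⧸ conjRel k H K M C

/-- The canonical copy of the conjugate module `ᶜM = CK ⊗_K M` inside
`H ⊗_K M` (the image of `CK ⊗_K M` under multiplication; this is indeed a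
copy of `ᶜM` since `H` is a free right `K`-module and `CK` is one of the
coset summands). -/
def conjMsub : Submodule k (Ind k H K M) :=
  Submodule.span k {z | ∃ (x : H) (_ : x ∈ CKsub k H K C) (m : M),
    z = Submodule.Quotient.mk (x ⊗ₜ[k] m)}

end Ind

section Comp

variable (L K : Subalgebra k H) (Λ : H) (C : Submodule k H)
variable (M : Type v) [AddCommGroup M] [Module k M] [Module ↥K M] [IsScalarTower k ↥K M]

/-- The underlying space `L ⊗_k (CK ⊗_k M)`. -/
def LCM : Type _ := ↥L ⊗[k] CKM k H K M C

instance : AddCommGroup (LCM k H L K C M) :=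
  inferInstanceAs (AddCommGroup (↥L ⊗[k] CKM k H K M C))

instance : Module k (LCM k H L K C M) :=
  inferInstanceAs (Module k (↥L ⊗[k] CKM k H K M C))

/-- The pure tensor `l ⊗ w` as an element of `L ⊗_k (CK ⊗_k M)`. -/
def lcmk (l : ↥L) (w : CKM k H K M C) : LCM k H L K C M := l ⊗ₜ[k] w

/-- The relations defining `L ⊗_{L ∩ ᶜK} ᶜM` as a quotient of
`L ⊗_k (CK ⊗_k M)`: the balancedness relations over `L ∩ ᶜK` (first set),
together with (the image of) the relations defining `ᶜM = CK ⊗_K M`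
(second set). -/
def compRel : Submodule k (LCM k H L K C M) :=
  Submodule.span k
    ({z | ∃ (l : ↥L) (a : H) (haL : a ∈ L) (_ : a ∈ conjK k H K Λ C)
        (x : ↥(CKsub k H K C)) (m : M) (hax : a * (x : H) ∈ CKsub k H K C),
        z = lcmk k H L K C M ⟨(l : H) * a, mul_mem l.2 haL⟩ (ckmk k H K M C x m)
          - lcmk k H L K C M l (ckmk k H K M C ⟨a * (x : H), hax⟩ m)} ∪
     {z | ∃ (l : ↥L) (x : ↥(CKsub k H K C)) (a : ↥K) (m : M)
        (hxa : (x : H) * (a : H) ∈ CKsub k H K C),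
        z = lcmk k H L K C M l (ckmk k H K M C ⟨(x : H) * (a : H), hxa⟩ m)
          - lcmk k H L K C M l (ckmk k H K M C x (a • m))})

/-- The module `L ⊗_{L ∩ ᶜK} ᶜM` (a left `L`-module via multiplication on the
first tensor factor). -/
abbrev Comp := LCM k H L K C M ⧸ compRel k H L K Λ C M

end Comp

open DirectSum

section Mackey

variable (L K : Subalgebra k H) (Λ : H)

/-- The Mackey isomorphism property for the pair `(L, K)` at the `K`-module
`M`: for any system of double coset representatives, the left-multiplication
map `⊕_C L ⊗_{L ∩ ᶜK} ᶜM → M↑_K^H↓_L^H`, `l ⊗ v ↦ l·v`, is an isomorphism of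
`L`-modules.  (A `k`-linear map satisfying the displayed formula on the
spanning elements is automatically `L`-equivariant for the evident
`L`-actions, so this property is stated for `k`-linear maps.) -/
def MackeyAt (M : Type v) [AddCommGroup M] [Module k M] [Module ↥K M]
    [IsScalarTower k ↥K M] [Module.Finite k M] : Prop :=
  ∀ (ι : Type) [DecidableEq ι] (rep : ι → Submodule k H),
    IsDoubleCosetReps k H L K rep →
    ∃ π : (⨁ i : ι, Comp k H L K Λ (rep i) M) →ₗ[k] Ind k H K M,
      Function.Bijective π ∧
      ∀ (i : ι) (l : ↥L) (x : ↥(CKsub k H K (rep i))) (m : M),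
        π (DirectSum.of (fun i => Comp k H L K Λ (rep i) M) i
            (Submodule.Quotient.mk (lcmk k H L K (rep i) M l (ckmk k H K M (rep i) x m)))) =
          Submodule.Quotient.mk (((l : H) * (x : H)) ⊗ₜ[k] m)

/-- `(L, K)` is a Mackey pair of Hopf subalgebras of `H` (here `Λ` is the
idempotent integral of `K`): for every finite-dimensional `K`-module `M` the
left-multiplication homomorphism `π_M` is an isomorphism. -/
def IsMackeyPair : Prop :=
  ∀ (M : Type v) [AddCommGroup M] [Module k M] [Module ↥K M]
    [IsScalarTower k ↥K M] [Module.Finite k M], MackeyAt k H L K Λ M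

end Mackey


section Statements

variable [FiniteDimensional k H] [IsSemisimpleRing H]

/-- `G` is a subgroup of the group `G(H)` of grouplike elements of `H`. -/
def IsGrouplikeSubgroup (G : Set H) : Prop :=
  (1 : H) ∈ G ∧
  (∀ g ∈ G, g ≠ 0 ∧ Coalgebra.comul (R := k) g = g ⊗ₜ[k] g) ∧
  (∀ g ∈ G, ∀ g' ∈ G, g * g' ∈ G) ∧
  (∀ g ∈ G, ∃ g' ∈ G, g * g' = 1 ∧ g' * g = 1)

/-!
A cointegral `l` dual to the normalized integral of `H` satisfies `l(1) = tr S²`, where `S` is the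
antipode. Wedderburn's theorem and a positivity argument give `l(1) ≠ 0`, and the trace argument of
Larson and Radford gives `S² = 1`, so that `l` is a Haar functional on `H`. For the bilinear form
`(x, y) ↦ l(x S(y))` distinct simple subcoalgebras are orthogonal, and so are the right cosets `CK`
and `DK` unless they coincide; hence `H` is the direct sum of its right cosets. Grouplike
elements permute the cosets by left multiplication, with one orbit for each double coset in
`kG\H/K`.

For `c` cocommutative in `C`, the element `c Λ_K` is cocommutative and right `K`-invariant, and such
elements of `CK` are determined by their counit; so `g ∈ ᶜK` if and only if `gCK = CK`, which
identifies `kG ∩ ᶜK` with `kG_C`. The Mackey map is inverted one coset at a time: if `w = g x` with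
`x ∈ CK`, then `w ⊗ m` must go to `g ⊗ x ⊗ m`, and another choice of `g` differs by an element of
`G_C`, which may be moved across the tensor sign.
-/
section Contraction

open Coalgebra

section Module

variable {R : Type*} [CommSemiring R] {M N : Type*} [AddCommMonoid M]
  [Module R M] [AddCommMonoid N] [Module R N]

/-- The left contraction `a ⊗ b ↦ f(a) b` of a tensor against a functional `f`; on `Δ x` it is the
action of `f` on `x` written `x ↼ f`. -/
def contractL : (M →ₗ[R] R) →ₗ[R] M ⊗[R] N →ₗ[R] N :=
  LinearMap.llcomp R _ _ _ (TensorProduct.lid R N).toLinearMap ∘ₗ LinearMap.rTensorHom N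

/-- The right contraction `a ⊗ b ↦ f(b) a` of a tensor against a functional `f`; on `Δ x` it is
the action of `f` on `x` written `f ⇀ x`. -/
def contractR : (N →ₗ[R] R) →ₗ[R] M ⊗[R] N →ₗ[R] M :=
  LinearMap.llcomp R _ _ _ (TensorProduct.rid R M).toLinearMap ∘ₗ LinearMap.lTensorHom M

@[simp] lemma contractL_tmul (f : M →ₗ[R] R) (x : M) (y : N) :
    contractL f (x ⊗ₜ[R] y) = f x • y := by
  simp [contractL]

@[simp] lemma contractR_tmul (f : N →ₗ[R] R) (x : M) (y : N) :
    contractR f (x ⊗ₜ[R] y) = f y • x := by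
  simp [contractR]

lemma apply_contractL (f : M →ₗ[R] R) (g : N →ₗ[R] R) (t : M ⊗[R] N) :
    g (contractL f t) = f (contractR g t) := by
  induction t with
  | zero => simp
  | tmul x y => simp [mul_comm]
  | add x y hx hy => simp only [map_add, hx, hy]

lemma contractR_comm (f : M →ₗ[R] R) (t : M ⊗[R] N) :
    contractR f (TensorProduct.comm R M N t) = contractL f t := by
  induction t with
  | zero => simp
  | tmul x y => simp
  | add x y hx hy => simp only [map_add, hx, hy]

lemma contractL_map {P Q : Type*} [AddCommMonoid P] [Module R P] [AddCommMonoid Q] [Module R Q]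
    (f : P →ₗ[R] R) (p : M →ₗ[R] P) (q : N →ₗ[R] Q) (t : M ⊗[R] N) :
    contractL f (TensorProduct.map p q t) = q (contractL (f ∘ₗ p) t) := by
  induction t with
  | zero => simp
  | tmul x y => simp
  | add x y hx hy => simp only [map_add, hx, hy]

lemma contractR_map {P Q : Type*} [AddCommMonoid P] [Module R P] [AddCommMonoid Q] [Module R Q]
    (f : Q →ₗ[R] R) (p : M →ₗ[R] P) (q : N →ₗ[R] Q) (t : M ⊗[R] N) :
    contractR f (TensorProduct.map p q t) = p (contractR (f ∘ₗ q) t) := by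
  induction t with
  | zero => simp
  | tmul x y => simp
  | add x y hx hy => simp only [map_add, hx, hy]

lemma sum_tmul_contractL {ι : Type*} [Fintype ι] (b : Module.Basis ι R M) (t : M ⊗[R] N) :
    ∑ i, b i ⊗ₜ[R] contractL (b.coord i) t = t := by
  induction t with
  | zero => simp
  | tmul x y =>
    conv_rhs => rw [← b.sum_repr x, TensorProduct.sum_tmul]
    simp [TensorProduct.smul_tmul]
  | add x y hx hy =>
    simp only [map_add, TensorProduct.tmul_add, Finset.sum_add_distrib, hx, hy]

lemma eq_of_contractL_eq [Module.Free R M] [Module.Finite R M] {t s : M ⊗[R] N}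
    (h : ∀ f : M →ₗ[R] R, contractL f t = contractL f s) : t = s := by
  let b := Module.Free.chooseBasis R M
  rw [← sum_tmul_contractL b t, ← sum_tmul_contractL b s]
  simp only [h]

end Module

section Algebra

variable {R : Type*} [CommSemiring R] {A : Type*} [Semiring A] [Algebra R A]

lemma contractL_mul_one_tmul (f : A →ₗ[R] R) (t : A ⊗[R] A) (a : A) :
    contractL f (t * (1 ⊗ₜ a)) = contractL f t * a := by
  induction t with
  | zero => simp
  | tmul x y => simp
  | add x y hx hy => simp only [add_mul, map_add, hx, hy]

lemma contractL_one_tmul_mul (f : A →ₗ[R] R) (t : A ⊗[R] A) (a : A) :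
    contractL f ((1 ⊗ₜ a) * t) = a * contractL f t := by
  induction t with
  | zero => simp
  | tmul x y => simp
  | add x y hx hy => simp only [mul_add, map_add, hx, hy]

lemma contractL_mul_tmul_one (f : A →ₗ[R] R) (t : A ⊗[R] A) (a : A) :
    contractL f (t * (a ⊗ₜ 1)) = contractL (f ∘ₗ LinearMap.mulRight R a) t := by
  induction t with
  | zero => simp
  | tmul x y => simp
  | add x y hx hy => simp only [add_mul, map_add, hx, hy]

lemma contractL_tmul_one_mul (f : A →ₗ[R] R) (t : A ⊗[R] A) (a : A) :
    contractL f ((a ⊗ₜ 1) * t) = contractL (f ∘ₗ LinearMap.mulLeft R a) t := by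
  induction t with
  | zero => simp
  | tmul x y => simp
  | add x y hx hy => simp only [mul_add, map_add, hx, hy]

lemma contractR_mul_one_tmul (f : A →ₗ[R] R) (t : A ⊗[R] A) (a : A) :
    contractR f (t * (1 ⊗ₜ a)) = contractR (f ∘ₗ LinearMap.mulRight R a) t := by
  induction t with
  | zero => simp
  | tmul x y => simp
  | add x y hx hy => simp only [add_mul, map_add, hx, hy]

lemma contractR_one_tmul_mul (f : A →ₗ[R] R) (t : A ⊗[R] A) (a : A) :
    contractR f ((1 ⊗ₜ a) * t) = contractR (f ∘ₗ LinearMap.mulLeft R a) t := by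
  induction t with
  | zero => simp
  | tmul x y => simp
  | add x y hx hy => simp only [mul_add, map_add, hx, hy]

lemma contractR_mul_tmul_one (f : A →ₗ[R] R) (t : A ⊗[R] A) (a : A) :
    contractR f (t * (a ⊗ₜ 1)) = contractR f t * a := by
  induction t with
  | zero => simp
  | tmul x y => simp
  | add x y hx hy => simp only [add_mul, map_add, hx, hy]

lemma contractR_tmul_one_mul (f : A →ₗ[R] R) (t : A ⊗[R] A) (a : A) :
    contractR f ((a ⊗ₜ 1) * t) = a * contractR f t := by
  induction t with
  | zero => simp
  | tmul x y => simp
  | add x y hx hy => simp only [mul_add, map_add, hx, hy]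

end Algebra

section Coalgebra

variable {R : Type*} [CommSemiring R] {A : Type*} [AddCommMonoid A] [Module R A] [Coalgebra R A]

@[simp] lemma contractL_counit_comul (x : A) :
    contractL (counit (R := R)) (comul (R := R) x) = x := by
  simp [contractL]

@[simp] lemma contractR_counit_comul (x : A) :
    contractR (counit (R := R)) (comul (R := R) x) = x := by
  simp [contractR]

lemma contractL_comul_contractR_comul (f g : A →ₗ[R] R) (x : A) :
    contractL f (comul (R := R) (contractR g (comul x))) =
      contractR g (comul (R := R) (contractL f (comul x))) := by
  let outer : A ⊗[R] (A ⊗[R] A) →ₗ[R] A :=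
    (TensorProduct.lid R A).toLinearMap ∘ₗ TensorProduct.map f (contractR g)
  have outer_assoc_tmul (t : A ⊗[R] A) (y : A) :
      outer (TensorProduct.assoc R A A A (t ⊗ₜ y)) = g y • contractL f t := by
    induction t with
    | zero => simp
    | tmul a b => simp [outer]
    | add s t hs ht => simp only [TensorProduct.add_tmul, map_add, smul_add, hs, ht]
  have left_eq : contractL f ∘ₗ comul ∘ₗ contractR g =
      outer ∘ₗ (TensorProduct.assoc R A A A).toLinearMap ∘ₗ comul.rTensor A := by
    ext a b
    simp [outer_assoc_tmul]
  have right_eq : contractR g ∘ₗ comul ∘ₗ contractL f = outer ∘ₗ comul.lTensor A := by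
    ext a b
    simp [outer]
  have := congr(outer $(coassoc_apply (R := R) x))
  exact (congr($left_eq (comul x)).trans this).trans congr($right_eq (comul x)).symm

lemma contractL_contractL_comul {R : Type*} [CommRing R] {A : Type*} [AddCommGroup A] [Module R A]
    [Module.Projective R A] [Coalgebra R A] (f g : A →ₗ[R] R) (x : A) :
    contractL (g ∘ₗ contractL f ∘ₗ comul (R := R)) (comul (R := R) x) =
      contractL g (comul (R := R) (contractL f (comul (R := R) x))) := by
  refine Module.eval_apply_injective R (LinearMap.ext fun p => ?_)
  simp only [Module.Dual.eval_apply, apply_contractL, LinearMap.comp_apply,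
    contractL_comul_contractR_comul]

end Coalgebra

end Contraction

section Convolution

open Coalgebra HopfAlgebra WithConv

variable {R : Type*} [CommSemiring R] {A : Type*} [Semiring A] [HopfAlgebra R A]

section AlgHom

variable {B : Type*} [Semiring B] [Algebra R B]

lemma conv_comp_antipode (φ : A →ₐ[R] B) :
    toConv φ.toLinearMap * toConv (φ.toLinearMap ∘ₗ antipode R) = 1 := by
  ext x
  simp [(ℛ R x).convMul_apply, ← map_mul, ← map_sum,
    sum_mul_antipode_eq_algebraMap_counit (ℛ R x)]

lemma conv_antipode_comp (φ : A →ₐ[R] B) :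
    toConv (φ.toLinearMap ∘ₗ antipode R) * toConv φ.toLinearMap = 1 := by
  ext x
  simp [(ℛ R x).convMul_apply, ← map_mul, ← map_sum,
    sum_antipode_mul_eq_algebraMap_counit (ℛ R x)]

end AlgHom

variable (R A) in
/-- The embedding `a ↦ a ⊗ 1` as an element of the convolution algebra `Hom(A, A ⊗ A)`. -/
abbrev inlConv : WithConv (A →ₗ[R] A ⊗[R] A) :=
  toConv (Algebra.TensorProduct.includeLeft (R := R) (S := R) (A := A) (B := A)).toLinearMap

variable (R A) in
/-- The embedding `a ↦ 1 ⊗ a` as an element of the convolution algebra `Hom(A, A ⊗ A)`. -/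
abbrev inrConv : WithConv (A →ₗ[R] A ⊗[R] A) :=
  toConv (Algebra.TensorProduct.includeRight (R := R) (A := A) (B := A)).toLinearMap

lemma comulAlgHom_eq_inlConv_mul_inrConv :
    toConv (Bialgebra.comulAlgHom R A).toLinearMap = inlConv R A * inrConv R A := by
  ext x
  simp [(ℛ R x).convMul_apply, (ℛ R x).eq]

lemma comulAlgHom_mul_inrConv_antipode :
    toConv (Bialgebra.comulAlgHom R A).toLinearMap *
      toConv ((inrConv R A).ofConv ∘ₗ antipode R) = inlConv R A := by
  rw [comulAlgHom_eq_inlConv_mul_inrConv, mul_assoc, conv_comp_antipode, mul_one]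

lemma inlConv_antipode_mul_comulAlgHom :
    toConv ((inlConv R A).ofConv ∘ₗ antipode R) *
      toConv (Bialgebra.comulAlgHom R A).toLinearMap = inrConv R A := by
  rw [comulAlgHom_eq_inlConv_mul_inrConv, ← mul_assoc, conv_antipode_comp, one_mul]

variable {ι : Type*} {h : A} (𝓡 : Repr R h ι)

lemma sum_comul_mul_one_tmul_antipode :
    ∑ i ∈ 𝓡.index, comul (R := R) (𝓡.left i) * (1 ⊗ₜ antipode R (𝓡.right i)) = h ⊗ₜ[R] 1 := by
  simpa [𝓡.convMul_apply] using congr($(comulAlgHom_mul_inrConv_antipode (R := R) (A := A)) h)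

lemma sum_antipode_tmul_one_mul_comul :
    ∑ i ∈ 𝓡.index, (antipode R (𝓡.left i) ⊗ₜ[R] 1) * comul (R := R) (𝓡.right i) = 1 ⊗ₜ h := by
  simpa [𝓡.convMul_apply] using congr($(inlConv_antipode_mul_comulAlgHom (R := R) (A := A)) h)

lemma sum_comul_antipode_mul_tmul_one :
    ∑ i ∈ 𝓡.index, comul (R := R) (antipode R (𝓡.left i)) * (𝓡.right i ⊗ₜ 1) =
      1 ⊗ₜ[R] antipode R h := by
  have key : toConv ((Bialgebra.comulAlgHom R A).toLinearMap ∘ₗ antipode R) * inlConv R A =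
      toConv ((inrConv R A).ofConv ∘ₗ antipode R) := by
    rw [← comulAlgHom_mul_inrConv_antipode, ← mul_assoc, conv_antipode_comp, one_mul]
  simpa [𝓡.convMul_apply] using congr($key h)

lemma sum_one_tmul_mul_comul_antipode :
    ∑ i ∈ 𝓡.index, (1 ⊗ₜ 𝓡.left i) * comul (R := R) (antipode R (𝓡.right i)) =
      antipode R h ⊗ₜ[R] 1 := by
  have key : inrConv R A * toConv ((Bialgebra.comulAlgHom R A).toLinearMap ∘ₗ antipode R) =
      toConv ((inlConv R A).ofConv ∘ₗ antipode R) := by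
    rw [← inlConv_antipode_mul_comulAlgHom, mul_assoc, conv_comp_antipode, mul_one]
  simpa [𝓡.convMul_apply] using congr($key h)

lemma comul_antipode :
    comul (R := R) (antipode R h) =
      ∑ i ∈ 𝓡.index, antipode R (𝓡.right i) ⊗ₜ antipode R (𝓡.left i) := by
  have key : toConv ((Bialgebra.comulAlgHom R A).toLinearMap ∘ₗ antipode R) =
      toConv ((inrConv R A).ofConv ∘ₗ antipode R) *
      toConv ((inlConv R A).ofConv ∘ₗ antipode R) := by
    refine left_inv_eq_right_inv (conv_antipode_comp _) ?_
    rw [← mul_assoc, comulAlgHom_mul_inrConv_antipode, conv_comp_antipode]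
  simpa [𝓡.convMul_apply] using congr($key h)

end Convolution

section Integral

open Coalgebra HopfAlgebra

section CommSemiring

variable {R : Type*} [CommSemiring R] {A : Type*} [Semiring A] [HopfAlgebra R A]
  {Λ h : A} {ι : Type*} (𝓡 : Repr R h ι)

lemma comul_mul_tmul_one_eq (hr : ∀ i ∈ 𝓡.index, Λ * 𝓡.left i = counit (R := R) (𝓡.left i) • Λ) :
    comul (R := R) Λ * (h ⊗ₜ 1) = comul (R := R) Λ * (1 ⊗ₜ[R] antipode R h) := by
  have absorb : ∀ i ∈ 𝓡.index, comul (R := R) Λ *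
      (comul (R := R) (𝓡.left i) * (1 ⊗ₜ antipode R (𝓡.right i))) =
      comul (R := R) Λ * (1 ⊗ₜ antipode R (counit (R := R) (𝓡.left i) • 𝓡.right i)) := by
    intro i hi
    rw [← mul_assoc, ← Bialgebra.comul_mul, hr i hi]
    simp
  rw [← sum_comul_mul_one_tmul_antipode 𝓡, Finset.mul_sum, Finset.sum_congr rfl absorb,
    ← Finset.mul_sum, ← TensorProduct.tmul_sum, ← map_sum, sum_counit_smul]

lemma one_tmul_mul_comul_eq
    (hl : ∀ i ∈ 𝓡.index, 𝓡.right i * Λ = counit (R := R) (𝓡.right i) • Λ) :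
    (1 ⊗ₜ[R] h) * comul (R := R) Λ = (antipode R h ⊗ₜ 1) * comul (R := R) Λ := by
  have absorb : ∀ i ∈ 𝓡.index,
      (antipode R (𝓡.left i) ⊗ₜ[R] 1) * comul (R := R) (𝓡.right i) * comul (R := R) Λ =
      (antipode R (counit (R := R) (𝓡.right i) • 𝓡.left i) ⊗ₜ 1) * comul (R := R) Λ := by
    intro i hi
    rw [mul_assoc, ← Bialgebra.comul_mul, hl i hi, map_smul, map_smul, mul_smul_comm,
      ← TensorProduct.smul_tmul', smul_mul_assoc]
  have sum_counit : ∑ i ∈ 𝓡.index, counit (R := R) (𝓡.right i) • 𝓡.left i = h := by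
    conv_rhs => rw [← contractR_counit_comul (R := R) h, ← 𝓡.eq]
    simp only [map_sum, contractR_tmul]
  rw [← sum_antipode_tmul_one_mul_comul 𝓡, Finset.sum_mul, Finset.sum_congr rfl absorb,
    ← Finset.sum_mul, ← TensorProduct.sum_tmul, ← map_sum, sum_counit]

end CommSemiring

/-- A left integral of the Hopf algebra `A`, normalized by `ε(Λ) = 1`. In finite dimension it is
automatically two-sided, see `IsNormalizedIntegral.mul_right`. -/
structure IsNormalizedIntegral (R : Type*) [CommSemiring R] {A : Type*} [Semiring A]
    [HopfAlgebra R A] (Λ : A) : Prop where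
  counit_eq : counit (R := R) Λ = 1
  mul_left : ∀ x, x * Λ = counit (R := R) x • Λ

variable {R : Type*} [Field R] {A : Type*} [Ring A] [HopfAlgebra R A]

variable (R A) in
lemma exists_isNormalizedIntegral [IsSemisimpleRing A] : ∃ Λ : A, IsNormalizedIntegral R Λ := by
  obtain ⟨J, hJ⟩ := exists_isCompl (RingHom.ker (Bialgebra.counitAlgHom R A))
  obtain ⟨a, ha, Λ, hΛ, hab⟩ := Submodule.mem_sup.1
    (hJ.sup_eq_top ▸ Submodule.mem_top : (1 : A) ∈ RingHom.ker (Bialgebra.counitAlgHom R A) ⊔ J)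
  have counit_a : counit (R := R) a = 0 := by simpa [RingHom.mem_ker] using ha
  refine ⟨Λ, by simpa [counit_a] using congr(counit (R := R) $hab), fun x => ?_⟩
  have mem_J : (x - algebraMap R A (counit (R := R) x)) * Λ ∈ J := J.smul_mem _ hΛ
  have mem_ker : (x - algebraMap R A (counit (R := R) x)) * Λ ∈
      RingHom.ker (Bialgebra.counitAlgHom R A) := by
    simp [RingHom.mem_ker]
  have := Submodule.disjoint_def.1 hJ.disjoint _ mem_ker mem_J
  rwa [sub_mul, sub_eq_zero, ← Algebra.smul_def] at this

namespace IsNormalizedIntegral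

variable {Λ : A} (hΛ : IsNormalizedIntegral R Λ)
include hΛ

lemma nontrivial : Nontrivial A :=
  nontrivial_of_ne Λ 0 fun h => by simpa [h] using hΛ.counit_eq

lemma contractL_mulLeft (f : A →ₗ[R] R) (h : A) :
    contractL (f ∘ₗ LinearMap.mulLeft R (antipode R h)) (comul (R := R) Λ) =
      h * contractL f (comul (R := R) Λ) := by
  rw [← contractL_tmul_one_mul, ← one_tmul_mul_comul_eq (ℛ R h) fun i _ => hΛ.mul_left _,
    contractL_one_tmul_mul]

lemma contractR_mulLeft (f : A →ₗ[R] R) (h : A) :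
    contractR (f ∘ₗ LinearMap.mulLeft R h) (comul (R := R) Λ) =
      antipode R h * contractR f (comul (R := R) Λ) := by
  rw [← contractR_one_tmul_mul, one_tmul_mul_comul_eq (ℛ R h) fun i _ => hΛ.mul_left _,
    contractR_tmul_one_mul]

variable [FiniteDimensional R A]

lemma contractL_surjective : Function.Surjective (contractL.flip (comul (R := R) Λ)) := by
  intro a
  let b := Module.finBasis R A
  have sum_eq_one : ∑ i, antipode R (b i) * contractL (b.coord i) (comul (R := R) Λ) = 1 := by
    have := mul_antipode_rTensor_comul_apply (R := R) Λ
    rw [← sum_tmul_contractL b (comul (R := R) Λ)] at this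
    simpa [hΛ.counit_eq] using this
  refine ⟨∑ i, b.coord i ∘ₗ LinearMap.mulLeft R (antipode R (a * antipode R (b i))), ?_⟩
  simp only [map_sum, LinearMap.flip_apply, hΛ.contractL_mulLeft, mul_assoc]
  rw [← Finset.mul_sum, sum_eq_one, mul_one]

lemma contractL_injective : Function.Injective (contractL.flip (comul (R := R) Λ)) :=
  (LinearMap.injective_iff_surjective_of_finrank_eq_finrank
    (Subspace.dual_finrank_eq (K := R) (V := A))).2 hΛ.contractL_surjective

lemma exists_contractL_eq_one : ∃ l : A →ₗ[R] R, contractL l (comul (R := R) Λ) = 1 :=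
  hΛ.contractL_surjective 1

lemma antipode_injective : Function.Injective (antipode R (A := A)) := by
  rw [injective_iff_map_eq_zero]
  intro h hh
  obtain ⟨l, hl⟩ := hΛ.exists_contractL_eq_one
  have := hΛ.contractL_mulLeft l h
  rwa [hl, mul_one, hh, LinearMap.mulLeft_zero_eq_zero, LinearMap.comp_zero, map_zero,
    LinearMap.zero_apply, eq_comm] at this

lemma antipode_surjective : Function.Surjective (antipode R (A := A)) :=
  LinearMap.injective_iff_surjective.1 hΛ.antipode_injective

lemma antipode_mul (x : A) : antipode R Λ * x = counit (R := R) x • antipode R Λ := by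
  obtain ⟨y, rfl⟩ := hΛ.antipode_surjective x
  rw [← antipode_mul_antidistrib, hΛ.mul_left, map_smul, counit_antipode]

lemma antipode_eq : antipode R Λ = Λ := by
  have := hΛ.antipode_mul Λ
  rwa [hΛ.mul_left, counit_antipode, hΛ.counit_eq, one_smul, one_smul, eq_comm] at this

lemma mul_right (x : A) : Λ * x = counit (R := R) x • Λ := by
  simpa only [hΛ.antipode_eq] using hΛ.antipode_mul x

lemma contractL_mulRight (f : A →ₗ[R] R) (h : A) :
    contractL (f ∘ₗ LinearMap.mulRight R h) (comul (R := R) Λ) =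
      contractL f (comul (R := R) Λ) * antipode R h := by
  rw [← contractL_mul_tmul_one, comul_mul_tmul_one_eq (ℛ R h) fun i _ => hΛ.mul_right _,
    contractL_mul_one_tmul]

lemma contractR_mulRight (f : A →ₗ[R] R) (h : A) :
    contractR (f ∘ₗ LinearMap.mulRight R (antipode R h)) (comul (R := R) Λ) =
      contractR f (comul (R := R) Λ) * h := by
  rw [← contractR_mul_one_tmul, ← comul_mul_tmul_one_eq (ℛ R h) fun i _ => hΛ.mul_right _,
    contractR_mul_tmul_one]

end IsNormalizedIntegral

lemma apply_eq_one_of_contractL_eq_one {Λ : A} {l : A →ₗ[R] R}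
    (hl : contractL l (comul (R := R) Λ) = 1) : l Λ = 1 := by
  have := apply_contractL l (counit (R := R)) (comul (R := R) Λ)
  rwa [hl, contractR_counit_comul, Bialgebra.counit_one, eq_comm] at this

namespace IsNormalizedIntegral

variable [FiniteDimensional R A] {Λ : A} (hΛ : IsNormalizedIntegral R Λ) {l : A →ₗ[R] R}
  (hl : contractL l (comul (R := R) Λ) = 1)
include hΛ hl

lemma contractL_comul (x : A) : contractL l (comul (R := R) x) = l x • 1 := by
  refine Module.eval_apply_injective R (LinearMap.ext fun f => ?_)
  have : f ∘ₗ contractL l ∘ₗ comul (R := R) = f 1 • l := by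
    apply hΛ.contractL_injective
    simp only [LinearMap.flip_apply, contractL_contractL_comul, hl, map_smul,
      Bialgebra.comul_one, Algebra.TensorProduct.one_def, contractL_tmul]
  simpa [mul_comm] using congr($this x)

lemma apply_antipode_antipode_mul (x y : A) :
    l (antipode R (antipode R x) * y) = l (y * x) := by
  have : l ∘ₗ LinearMap.mulLeft R (antipode R (antipode R x)) = l ∘ₗ LinearMap.mulRight R x := by
    apply hΛ.contractL_injective
    simp only [LinearMap.flip_apply, hΛ.contractL_mulLeft, hΛ.contractL_mulRight, hl, one_mul,
      mul_one]
  exact congr($this y)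

lemma eq_zero_of_forall_apply_mul_eq_zero {x : A} (h : ∀ y, l (y * x) = 0) : x = 0 := by
  have := hΛ.contractL_mulRight l x
  rw [show l ∘ₗ LinearMap.mulRight R x = 0 from LinearMap.ext h, hl, one_mul, map_zero,
    LinearMap.zero_apply] at this
  exact hΛ.antipode_injective (by rw [← this, map_zero])

lemma contractR_comul (x : A) :
    contractR l (comul (R := R) x) = l x • contractR l (comul (R := R) Λ) := by
  refine Module.eval_apply_injective R (LinearMap.ext fun f => ?_)
  have : l ∘ₗ contractL f ∘ₗ comul (R := R) = f (contractR l (comul (R := R) Λ)) • l := by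
    apply hΛ.contractL_injective
    simp only [LinearMap.flip_apply, contractL_contractL_comul, hΛ.contractL_comul hl,
      apply_eq_one_of_contractL_eq_one hl, one_smul, map_smul, apply_contractL]
  have := congr($this x)
  rw [LinearMap.comp_apply, LinearMap.comp_apply, apply_contractL] at this
  simpa [mul_comm] using this

lemma isGroupLikeElem : IsGroupLikeElem R (contractR l (comul (R := R) Λ)) where
  counit_eq_one := by
    rw [← apply_contractL, contractL_counit_comul, apply_eq_one_of_contractL_eq_one hl]
  comul_eq_tmul_self := eq_of_contractL_eq fun f => by
    rw [contractL_comul_contractR_comul, hΛ.contractR_comul hl, apply_contractL, contractL_tmul]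

lemma semiconjBy (x : A) : SemiconjBy (contractR l (comul (R := R) Λ)) x
    (antipode R (antipode R (antipode R (antipode R x)))) := by
  rw [SemiconjBy, ← hΛ.contractR_mulRight, ← hΛ.contractR_mulLeft]
  congr 2
  ext y
  exact (hΛ.apply_antipode_antipode_mul hl (antipode R x) y).symm

lemma trace_antipode_comp (f : A →ₗ[R] A) {ι : Type*} (𝓡 : Repr R Λ ι) :
    LinearMap.trace R A (antipode R ∘ₗ f) = l (∑ i ∈ 𝓡.index, 𝓡.left i * f (𝓡.right i)) := by
  have antipode_comp_eq_sum : antipode R ∘ₗ f = ∑ i ∈ 𝓡.index,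
      (l ∘ₗ LinearMap.mulLeft R (𝓡.left i) ∘ₗ f).smulRight (𝓡.right i) := by
    ext x
    have := hΛ.contractL_mulRight l (f x)
    rw [hl, one_mul, ← 𝓡.eq] at this
    simpa using this.symm
  simp [antipode_comp_eq_sum]

lemma trace_mulRight_comp_antipode_sq (a : A) :
    LinearMap.trace R A (LinearMap.mulRight R a ∘ₗ antipode R ∘ₗ antipode R) = l a := by
  rw [← LinearMap.comp_assoc, LinearMap.trace_comp_comm', hΛ.trace_antipode_comp hl _ (ℛ R Λ)]
  simp only [LinearMap.comp_apply, LinearMap.mulRight_apply, ← mul_assoc, ← Finset.sum_mul,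
    sum_mul_antipode_eq_smul, hΛ.counit_eq, one_smul, one_mul]

end IsNormalizedIntegral

end Integral

section Positivity

open Polynomial

variable {F : Type*} [Field F] [IsAlgClosed F]

lemma trace_pow_eq_sum_eigenvalues {V : Type*} [AddCommGroup V] [Module F V]
    [FiniteDimensional F V] {f : Module.End F V} (hf : f.IsSemisimple) (m : ℕ) :
    LinearMap.trace F V (f ^ m) =
      ∑ μ : f.Eigenvalues, Module.finrank F (f.eigenspace μ) • (μ : F) ^ m := by
  classical
  have internal : DirectSum.IsInternal fun μ : f.Eigenvalues => f.eigenspace μ :=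
    DirectSum.isInternal_ne_bot_iff.2 <| DirectSum.isInternal_submodule_of_iSupIndep_of_iSup_eq_top
      f.eigenspaces_iSupIndep hf.iSup_eigenspace_eq_top
  have pow_apply {μ : F} {x : V} (hx : x ∈ f.eigenspace μ) : (f ^ m) x = μ ^ m • x := by
    rw [Module.End.mem_eigenspace_iff] at hx
    induction m with
    | zero => simp
    | succ m ih => rw [pow_succ, Module.End.mul_apply, hx, map_smul, ih, smul_smul, pow_succ']
  have mapsTo (μ : f.Eigenvalues) : Set.MapsTo (f ^ m) (f.eigenspace μ) (f.eigenspace μ) :=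
    fun x hx => by
      rw [pow_apply hx]
      exact Submodule.smul_mem _ _ hx
  rw [LinearMap.trace_eq_sum_trace_restrict internal mapsTo]
  refine Finset.sum_congr rfl fun μ _ => ?_
  have restrict_eq : (f ^ m).restrict (mapsTo μ) = (μ : F) ^ m • LinearMap.id :=
    LinearMap.ext fun x => Subtype.ext (pow_apply x.2)
  rw [restrict_eq, map_smul, LinearMap.trace_id, smul_eq_mul, nsmul_eq_mul, mul_comm]

variable [CharZero F] {N : ℕ} [NeZero N]

lemma exists_trace_pow_eq_aeval {ζ : F} (hζ : IsPrimitiveRoot ζ N) {V : Type*} [AddCommGroup V]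
    [Module F V] [FiniteDimensional F V] {f : Module.End F V} (hf : f ^ N = 1) :
    ∃ p : ℚ[X], ∀ m, LinearMap.trace F V (f ^ m) = aeval (ζ ^ m) p := by
  have semisimple : f.IsSemisimple :=
    Module.End.isSemisimple_of_squarefree_aeval_eq_zero
      (X_pow_sub_one_separable_iff.2 (NeZero.ne (N : F))).squarefree (by simp [hf])
  have exists_pow (μ : f.Eigenvalues) : ∃ e : ℕ, ζ ^ e = (μ : F) := by
    obtain ⟨x, hx⟩ : ∃ x, f.HasEigenvector (μ : F) x :=
      Module.End.HasEigenvalue.exists_hasEigenvector μ.2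
    obtain ⟨e, -, he⟩ := hζ.eq_pow_of_pow_eq_one (ξ := (μ : F)) <| by
      have := hx.pow_apply N
      rw [hf, Module.End.one_apply, eq_comm] at this
      exact smul_left_injective F hx.2 (this.trans (one_smul F x).symm)
    exact ⟨e, he⟩
  choose e he using exists_pow
  refine ⟨∑ μ : f.Eigenvalues, C (Module.finrank F (f.eigenspace μ) : ℚ) * X ^ e μ, fun m => ?_⟩
  rw [trace_pow_eq_sum_eigenvalues semisimple, map_sum]
  refine Finset.sum_congr rfl fun μ _ => ?_
  simp [← he, ← pow_mul, mul_comm m]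

omit [IsAlgClosed F] in
lemma aeval_eq_zero_iff_of_isPrimitiveRoot {E : Type*} [Field E] [CharZero E] {ζ : F} {ω : E}
    (hζ : IsPrimitiveRoot ζ N) (hω : IsPrimitiveRoot ω N) (q : ℚ[X]) :
    aeval ζ q = 0 ↔ aeval ω q = 0 := by
  rw [← minpoly.dvd_iff, ← minpoly.dvd_iff, ← cyclotomic_eq_minpoly_rat hζ (NeZero.pos N),
    ← cyclotomic_eq_minpoly_rat hω (NeZero.pos N)]

lemma aeval_pow_sub_one_eq_conj {ω : ℂ} (hω : IsPrimitiveRoot ω N) (p : ℚ[X]) :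
    aeval (ω ^ (N - 1)) p = starRingEnd ℂ (aeval ω p) := by
  have conj_eq : starRingEnd ℂ ω = ω ^ (N - 1) := by
    rw [← Complex.inv_eq_conj (hω.norm'_eq_one (NeZero.ne N))]
    refine inv_eq_of_mul_eq_one_left ?_
    rw [pow_sub_one_mul (NeZero.ne N), hω.pow_eq_one]
  rw [← conj_eq]
  exact aeval_algHom_apply (starRingEnd ℂ).toRatAlgHom ω p

/- Over `ℂ` the summands are `|tr wᵢ|²`. All traces being rational polynomials in a root of unity,
the vanishing of the sum can be transferred to `ℂ`. -/
lemma sum_trace_mul_trace_inv_ne_zero {ι : Type*} [Fintype ι] [Nonempty ι] {n : ι → ℕ}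
    (w : (i : ι) → Matrix (Fin (n i)) (Fin (n i)) F) (hw : ∀ i, w i ^ N = 1)
    (ht : ∀ i, (w i).trace ≠ 0) : ∑ i, (w i).trace * (w i ^ (N - 1)).trace ≠ 0 := by
  obtain ⟨ζ, hζ⟩ := HasEnoughRootsOfUnity.exists_primitiveRoot F N
  have hω := Complex.isPrimitiveRoot_exp N (NeZero.ne N)
  set ω := Complex.exp (2 * Real.pi * Complex.I / N)
  have exists_poly (i : ι) : ∃ p : ℚ[X], ∀ m, (w i ^ m).trace = aeval (ζ ^ m) p := by
    obtain ⟨p, hp⟩ := exists_trace_pow_eq_aeval hζ (f := Matrix.toLin' (w i)) <| by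
      rw [← Matrix.toLin'_pow, hw, Matrix.toLin'_one, Module.End.one_eq_id]
    exact ⟨p, fun m => by rw [← hp, ← Matrix.toLin'_pow, Matrix.trace_toLin'_eq]⟩
  choose p hp using exists_poly
  intro sum_eq_zero
  have sum_normSq : ((∑ i, Complex.normSq (aeval ω (p i)) : ℝ) : ℂ) = 0 := by
    have : aeval ζ (∑ i, p i * (p i).comp (X ^ (N - 1))) = 0 := by
      simpa [aeval_comp, ← hp, fun i => by simpa using (hp i 1).symm] using sum_eq_zero
    rw [aeval_eq_zero_iff_of_isPrimitiveRoot hζ hω] at this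
    simpa [aeval_comp, aeval_pow_sub_one_eq_conj hω, Complex.mul_conj] using this
  rw [Complex.ofReal_eq_zero,
    Finset.sum_eq_zero_iff_of_nonneg fun i _ => Complex.normSq_nonneg _] at sum_normSq
  obtain ⟨i⟩ := ‹Nonempty ι›
  have := Complex.normSq_eq_zero.1 (sum_normSq i (Finset.mem_univ i))
  rw [← aeval_eq_zero_iff_of_isPrimitiveRoot hζ hω, ← pow_one ζ, ← hp, pow_one] at this
  exact ht i this

end Positivity

section BlockMatrix

variable {F : Type*} [Field F] {ι : Type*} {d : ι → ℕ}

/-- A finite product of matrix algebras, the Wedderburn form of a semisimple algebra over an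
algebraically closed field. -/
abbrev BlockMatrix (F : Type*) {ι : Type*} (d : ι → ℕ) :=
  (i : ι) → Matrix (Fin (d i)) (Fin (d i)) F

variable [Fintype ι]

/-- The sum of the traces of the blocks of a block matrix. -/
def blockTrace (F : Type*) [Field F] (d : ι → ℕ) : BlockMatrix F d →ₗ[F] F :=
  ∑ i, Matrix.traceLinearMap (Fin (d i)) F F ∘ₗ LinearMap.proj i

lemma blockTrace_apply (x : BlockMatrix F d) : blockTrace F d x = ∑ i, (x i).trace := by
  simp [blockTrace]

lemma blockTrace_mul_comm (x y : BlockMatrix F d) :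
    blockTrace F d (x * y) = blockTrace F d (y * x) := by
  simp only [blockTrace_apply, Pi.mul_apply, Matrix.trace_mul_comm (x _)]

section TraceForm

lemma blockTrace_mul_single [DecidableEq ι] (v : BlockMatrix F d) (i : ι) (p q : Fin (d i)) :
    blockTrace F d (v * Pi.single i (Matrix.single p q 1)) = v i q p := by
  rw [blockTrace_apply, Finset.sum_eq_single i]
  · simp [Matrix.trace_mul_single]
  · intro j _ hj
    simp [Pi.single_eq_of_ne hj]
  · simp

lemma exists_eq_blockTrace_mul (l : BlockMatrix F d →ₗ[F] F) :
    ∃ v, ∀ x, l x = blockTrace F d (v * x) := by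
  classical
  let v : BlockMatrix F d := fun i => Matrix.of fun p q => l (Pi.single i (Matrix.single q p 1))
  suffices l = blockTrace F d ∘ₗ LinearMap.mulLeft F v from ⟨v, fun x => congr($this x)⟩
  refine LinearMap.pi_ext' fun i => Matrix.ext_linearMap _ fun p q => LinearMap.ext_ring ?_
  simp [blockTrace_mul_single, v]

lemma eq_of_forall_blockTrace_mul {a b : BlockMatrix F d}
    (h : ∀ y, blockTrace F d (a * y) = blockTrace F d (b * y)) : a = b := by
  classical
  ext i : 1
  refine Matrix.ext fun p q => ?_
  rw [← blockTrace_mul_single a, h, blockTrace_mul_single]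

lemma trace_mulRight_comp_mulLeft (a c : BlockMatrix F d) :
    LinearMap.trace F _ (LinearMap.mulRight F c ∘ₗ LinearMap.mulLeft F a) =
      ∑ i, (a i).trace * (c i).trace := by
  classical
  rw [LinearMap.trace_eq_matrix_trace F
    (Pi.basis fun i => Matrix.stdBasis F (Fin (d i)) (Fin (d i))), Matrix.trace, Fintype.sum_sigma]
  refine Finset.sum_congr rfl fun i _ => ?_
  rw [Fintype.sum_prod_type, Matrix.trace, Matrix.trace, Finset.sum_mul_sum]
  refine Finset.sum_congr rfl fun p _ => Finset.sum_congr rfl fun q _ => ?_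
  rw [Matrix.diag_apply, LinearMap.toMatrix_apply, Pi.basis_apply, Matrix.stdBasis_eq_single]
  simp [Matrix.stdBasis, Matrix.mul_apply, Matrix.single_apply, ite_and]

variable {l : BlockMatrix F d →ₗ[F] F} {σ : Module.End F (BlockMatrix F d)}

lemma exists_unit_eq_blockTrace_mul (hl : ∀ x, (∀ y, l (y * x) = 0) → x = 0) :
    ∃ v : (BlockMatrix F d)ˣ, ∀ x, l x = blockTrace F d (v * x) := by
  obtain ⟨v, hv⟩ := exists_eq_blockTrace_mul l
  have injective : Function.Injective (LinearMap.mulRight F v) := by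
    rw [injective_iff_map_eq_zero]
    intro x hx
    rw [LinearMap.mulRight_apply] at hx
    refine hl x fun y => ?_
    rw [hv, blockTrace_mul_comm, mul_assoc, hx, mul_zero, map_zero]
  obtain ⟨u, huv⟩ := LinearMap.injective_iff_surjective.1 injective 1
  exact ⟨⟨v, u, funext fun i => mul_eq_one_comm.1 congr($huv i), huv⟩, hv⟩

variable {v : (BlockMatrix F d)ˣ} (hv : ∀ x, l x = blockTrace F d (v * x))
  (hlσ : ∀ x y, l (σ x * y) = l (y * x))
include hv hlσ

lemma eq_conj_of_apply_mul (x : BlockMatrix F d) : σ x = ↑v⁻¹ * x * v := by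
  have : (v : BlockMatrix F d) * σ x = x * v := by
    refine eq_of_forall_blockTrace_mul fun y => ?_
    rw [mul_assoc, ← hv, hlσ, hv, ← mul_assoc, blockTrace_mul_comm, mul_assoc]
  rw [mul_assoc, ← this, Units.inv_mul_cancel_left]

lemma trace_inv_eq_one [∀ i, NeZero (d i)]
    (htr : ∀ b, LinearMap.trace F _ (LinearMap.mulRight F b ∘ₗ σ) = l b) (i : ι) :
    ((↑v⁻¹ : BlockMatrix F d) i).trace = 1 := by
  have comp_eq (b : BlockMatrix F d) : LinearMap.mulRight F b ∘ₗ σ =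
      LinearMap.mulRight F (v * b) ∘ₗ LinearMap.mulLeft F ↑v⁻¹ := by
    refine LinearMap.ext fun x => ?_
    simp [eq_conj_of_apply_mul hv hlσ, mul_assoc]
  have smul_eq : (fun i => ((↑v⁻¹ : BlockMatrix F d) i).trace • (v : BlockMatrix F d) i) = v := by
    refine eq_of_forall_blockTrace_mul fun y => ?_
    rw [← hv, ← htr, comp_eq, trace_mulRight_comp_mulLeft, blockTrace_apply]
    simp [Matrix.trace_smul]
  have := congr(($smul_eq * ↑v⁻¹) i 0 0)
  have v_mul_inv : (v : BlockMatrix F d) i * (↑v⁻¹ : BlockMatrix F d) i = 1 :=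
    congr($(v.mul_inv) i)
  simpa [v_mul_inv] using this

lemma commute_inv_pow {N : ℕ} (hσ : σ ^ N = 1) (x : BlockMatrix F d) :
    Commute x (↑v⁻¹ ^ N) := by
  have pow_apply (m : ℕ) : (σ ^ m) x = ↑v⁻¹ ^ m * x * (v : BlockMatrix F d) ^ m := by
    induction m with
    | zero => simp
    | succ m ih =>
      rw [pow_succ', Module.End.mul_apply, ih, eq_conj_of_apply_mul hv hlσ, pow_succ' _ m,
        pow_succ _ m]
      simp only [mul_assoc]
  have := pow_apply N
  rw [hσ, Module.End.one_apply] at this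
  rw [Commute, SemiconjBy]
  nth_rw 1 [this]
  rw [mul_assoc, ← Units.val_pow_eq_pow_val, ← Units.val_pow_eq_pow_val, inv_pow, Units.mul_inv,
    mul_one]

end TraceForm

section NonVanishing

variable [IsAlgClosed F] {N : ℕ} [NeZero N]

lemma exists_pow_eq_scalar {m : ℕ} {u : Matrix (Fin m) (Fin m) F}
    (hu : ∀ x, Commute x (u ^ N)) : ∃ s : F, u ^ N = Matrix.scalar _ (s ^ N) := by
  obtain ⟨c, hc⟩ := Matrix.mem_range_scalar_of_commute_single fun p q _ => hu (Matrix.single p q 1)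
  obtain ⟨s, hs⟩ := IsAlgClosed.exists_pow_nat_eq c (NeZero.pos N)
  exact ⟨s, by rw [hs, hc]⟩

/- Rescaling the blocks of `v⁻¹` to matrices `wᵢ` with `wᵢ ^ N = 1` does not change the products
`tr(vᵢ⁻¹) tr(vᵢ)`. -/
lemma blockTrace_ne_zero [CharZero F] [Nonempty ι] [∀ i, NeZero (d i)] {v : (BlockMatrix F d)ˣ}
    (trace_inv : ∀ i, ((↑v⁻¹ : BlockMatrix F d) i).trace = 1)
    (central : ∀ x, Commute x ((↑v⁻¹ : BlockMatrix F d) ^ N)) : blockTrace F d v ≠ 0 := by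
  classical
  have inv_mul (i : ι) : (↑v⁻¹ : BlockMatrix F d) i * (v : BlockMatrix F d) i = 1 :=
    congr($(v.inv_mul) i)
  have pow_eq_scalar (i : ι) :
      ∃ s : F, (↑v⁻¹ : BlockMatrix F d) i ^ N = Matrix.scalar _ (s ^ N) := by
    refine exists_pow_eq_scalar fun x => ?_
    simpa [Commute, SemiconjBy] using congr($(central (Pi.single i x)) i)
  choose s hs using pow_eq_scalar
  have s_ne_zero (i : ι) : s i ≠ 0 := by
    intro h
    have isUnit : IsUnit ((↑v⁻¹ : BlockMatrix F d) i ^ N) :=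
      (IsUnit.of_mul_eq_one _ (inv_mul i)).pow N
    rw [hs, h, zero_pow (NeZero.ne N), map_zero] at isUnit
    exact not_isUnit_zero isUnit
  let w : BlockMatrix F d := fun i => (s i)⁻¹ • (↑v⁻¹ : BlockMatrix F d) i
  have trace_w (i : ι) : (w i).trace = (s i)⁻¹ := by simp [w, Matrix.trace_smul, trace_inv]
  have w_pow (i : ι) : w i ^ N = 1 := by
    rw [show w i ^ N = _ from smul_pow _ _ _, hs, Matrix.scalar_apply,
      ← Matrix.smul_one_eq_diagonal, smul_smul, ← mul_pow, inv_mul_cancel₀ (s_ne_zero i), one_pow,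
      one_smul]
  have w_pow_sub_one (i : ι) : w i ^ (N - 1) = s i • (v : BlockMatrix F d) i :=
    left_inv_eq_right_inv (by rw [pow_sub_one_mul (NeZero.ne N), w_pow])
      (by simp [w, smul_smul, s_ne_zero, inv_mul] : w i * _ = 1)
  have := sum_trace_mul_trace_inv_ne_zero w w_pow fun i => by simp [trace_w, s_ne_zero]
  simpa [trace_w, w_pow_sub_one, Matrix.trace_smul, s_ne_zero, blockTrace_apply] using this

end NonVanishing

end BlockMatrix

section CubeEqSelf

variable {F : Type*} [Field F] {V : Type*} [AddCommGroup V] [Module F V] {f : Module.End F V}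

/-- For an endomorphism `f` with `f ^ 3 = f`, the projection onto the eigenspace of `1` along the
eigenspaces of `0` and `-1`. -/
def oneProj (f : Module.End F V) : Module.End F V :=
  (2⁻¹ : F) • (f * f + f)

section NeZero

variable [NeZero (2 : F)]

lemma oneProj_add_oneProj_neg (f : Module.End F V) : oneProj f + oneProj (-f) = f * f := by
  rw [oneProj, oneProj, neg_mul_neg, ← smul_add, add_add_add_comm, add_neg_cancel, add_zero,
    ← two_smul F, inv_smul_smul₀ two_ne_zero]

lemma oneProj_sub_oneProj_neg (f : Module.End F V) : oneProj f - oneProj (-f) = f := by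
  rw [oneProj, oneProj, neg_mul_neg, ← smul_sub, add_sub_add_left_eq_sub, sub_neg_eq_add,
    ← two_smul F, inv_smul_smul₀ two_ne_zero]

lemma isIdempotentElem_oneProj (hf : f ^ 3 = f) : IsIdempotentElem (oneProj f) := by
  have sq : (f * f + f) * (f * f + f) = (2 : F) • (f * f + f) := by
    calc (f * f + f) * (f * f + f) = f ^ 3 * f + f ^ 3 + f ^ 3 + f * f := by noncomm_ring
      _ = (2 : F) • (f * f + f) := by rw [hf, two_smul]; abel
  rw [IsIdempotentElem, oneProj, smul_mul_smul_comm, sq, smul_smul, mul_assoc,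
    inv_mul_cancel₀ two_ne_zero, mul_one]

variable [FiniteDimensional F V]

lemma trace_oneProj (hf : f ^ 3 = f) :
    LinearMap.trace F V (oneProj f) = Module.finrank F (LinearMap.range (oneProj f)) :=
  (LinearMap.IsIdempotentElem.isProj_range _ (isIdempotentElem_oneProj hf)).trace

lemma trace_eq_finrank_sub_finrank (hf : f ^ 3 = f) : LinearMap.trace F V f =
    Module.finrank F (LinearMap.range (oneProj f)) -
      Module.finrank F (LinearMap.range (oneProj (-f))) := by
  rw [← trace_oneProj hf, ← trace_oneProj (Odd.neg_pow (by decide) f |>.trans (by rw [hf])),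
    ← map_sub, oneProj_sub_oneProj_neg]

lemma eq_neg_one_of_finrank_range_oneProj (hf : f * f = 1)
    (h : Module.finrank F (LinearMap.range (oneProj f)) = 0) : f = -1 := by
  have zero : oneProj f = 0 := LinearMap.range_eq_bot.1 (Submodule.finrank_eq_zero.1 h)
  rw [← oneProj_sub_oneProj_neg f, ← hf, ← oneProj_add_oneProj_neg f, zero, zero_sub, zero_add]

end NeZero

lemma eq_one_or_eq_neg_one_of_trace_eq_finrank_mul [CharZero F] [FiniteDimensional F V]
    (hf : f * f = 1) (hf0 : LinearMap.trace F V f ≠ 0) {z : ℤ}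
    (hz : LinearMap.trace F V f = Module.finrank F V * z) : f = 1 ∨ f = -1 := by
  have cube {g : Module.End F V} (hg : g * g = 1) : g ^ 3 = g := by rw [pow_succ, sq, hg, one_mul]
  have hf' : -f * -f = 1 := by rw [neg_mul_neg, hf]
  have sub := trace_eq_finrank_sub_finrank (cube hf)
  have add : (Module.finrank F (LinearMap.range (oneProj f)) : F) +
      Module.finrank F (LinearMap.range (oneProj (-f))) = Module.finrank F V := by
    rw [← trace_oneProj (cube hf), ← trace_oneProj (cube hf'), ← map_add, oneProj_add_oneProj_neg,
      hf, LinearMap.trace_one]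
  rcases Nat.eq_zero_or_pos (Module.finrank F (LinearMap.range (oneProj f))) with h | h
  · exact .inr (eq_neg_one_of_finrank_range_oneProj hf h)
  rcases Nat.eq_zero_or_pos (Module.finrank F (LinearMap.range (oneProj (-f)))) with h' | h'
  · exact .inl (neg_injective (eq_neg_one_of_finrank_range_oneProj hf' h'))
  generalize Module.finrank F (LinearMap.range (oneProj f)) = a at *
  generalize Module.finrank F (LinearMap.range (oneProj (-f))) = b at *
  have eq : (a : ℤ) - b = (a + b) * z := by
    have : (a : F) - b = (a + b) * z := by rw [add, ← hz, sub]
    exact_mod_cast this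
  have ne : (a : ℤ) - b ≠ 0 := fun h => hf0 (by rw [sub]; exact_mod_cast h)
  rcases lt_trichotomy z 0 with hz | rfl | hz
  · nlinarith
  · exact absurd (by simpa using eq) ne
  · nlinarith

end CubeEqSelf

section RegularCharacter

variable {R : Type*} [CommRing R] {A : Type*} [Ring A] [Algebra R A]

variable (R A) in
/-- The character of the left regular representation; `Algebra.trace` is its commutative case. -/
def regularCharacter : A →ₗ[R] R :=
  LinearMap.trace R A ∘ₗ (Algebra.lmul R A).toLinearMap

lemma regularCharacter_apply (x : A) :
    regularCharacter R A x = LinearMap.trace R A (LinearMap.mulLeft R x) :=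
  rfl

lemma regularCharacter_tensorProduct [Module.Free R A] [Module.Finite R A] (t : A ⊗[R] A) :
    regularCharacter R (A ⊗[R] A) t =
      regularCharacter R A (contractL (regularCharacter R A) t) := by
  induction t with
  | zero => simp
  | add s t hs ht => simp only [map_add, hs, ht]
  | tmul a b =>
    have : LinearMap.mulLeft R (a ⊗ₜ[R] b) =
        TensorProduct.map (LinearMap.mulLeft R a) (LinearMap.mulLeft R b) := by
      ext; simp
    simpa [regularCharacter_apply] using
      congr(LinearMap.trace R _ $this).trans (LinearMap.trace_tensorProduct' _ _)

end RegularCharacter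

section HopfRegularCharacter

open Coalgebra HopfAlgebra

section Galois

variable {R : Type*} [CommSemiring R] {A : Type*} [Semiring A] [HopfAlgebra R A]

variable (R A) in
/-- The Galois map `y ⊗ z ↦ Δ(y) (1 ⊗ z)`, which intertwines multiplication by `x ⊗ 1` with
multiplication by `Δ(x)`. -/
def galoisMap : A ⊗[R] A →ₗ[R] A ⊗[R] A :=
  LinearMap.mul' R (A ⊗[R] A) ∘ₗ TensorProduct.map (comul (R := R))
    (Algebra.TensorProduct.includeRight (R := R) (A := A) (B := A)).toLinearMap

lemma galoisMap_tmul (y z : A) : galoisMap R A (y ⊗ₜ z) = comul (R := R) y * (1 ⊗ₜ z) := by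
  simp [galoisMap]

lemma galoisMap_mul (x : A) (t : A ⊗[R] A) :
    galoisMap R A ((x ⊗ₜ 1) * t) = comul (R := R) x * galoisMap R A t := by
  induction t with
  | zero => simp
  | add s t hs ht => simp only [map_add, mul_add, hs, ht]
  | tmul y z => simp [galoisMap_tmul, mul_assoc]

lemma galoisMap_surjective : Function.Surjective (galoisMap R A) := by
  rw [← LinearMap.range_eq_top, eq_top_iff, ← TensorProduct.span_tmul_eq_top, Submodule.span_le]
  rintro - ⟨y, z, rfl⟩
  refine ⟨∑ i ∈ (ℛ R y).index, (ℛ R y).left i ⊗ₜ (antipode R ((ℛ R y).right i) * z), ?_⟩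
  have := congr($(sum_comul_mul_one_tmul_antipode (ℛ R y)) * (1 ⊗ₜ[R] z))
  simpa [Finset.sum_mul, mul_assoc, galoisMap_tmul] using this

end Galois

variable {R : Type*} [Field R] {A : Type*} [Ring A] [HopfAlgebra R A] [FiniteDimensional R A]

lemma regularCharacter_contractL_comul (x : A) :
    regularCharacter R A (contractL (regularCharacter R A) (comul (R := R) x)) =
      Module.finrank R A * regularCharacter R A x := by
  let e := LinearEquiv.ofBijective (galoisMap R A)
    ⟨LinearMap.injective_iff_surjective.2 galoisMap_surjective, galoisMap_surjective⟩
  have conj_mulLeft : LinearMap.mulLeft R (comul (R := R) x) =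
      e.conj (LinearMap.mulLeft R (x ⊗ₜ 1)) := by
    refine LinearMap.ext fun t => ?_
    obtain ⟨s, rfl⟩ := e.surjective t
    rw [LinearEquiv.conj_apply_apply, e.symm_apply_apply]
    exact (galoisMap_mul x s).symm
  rw [← regularCharacter_tensorProduct, regularCharacter_apply, conj_mulLeft,
    LinearMap.trace_conj', ← regularCharacter_apply, regularCharacter_tensorProduct]
  simp [regularCharacter_apply, mul_comm]

variable (R A) in
/-- The operator `x ↦ ∑ χ(x₁) x₂`, where `χ` is the character of the regular representation. -/
def characterConv : Module.End R A :=
  contractL (regularCharacter R A) ∘ₗ comul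

lemma characterConv_mul_self :
    characterConv R A * characterConv R A = (Module.finrank R A : R) • characterConv R A := by
  have : regularCharacter R A ∘ₗ contractL (regularCharacter R A) ∘ₗ comul (R := R) =
      (Module.finrank R A : R) • regularCharacter R A :=
    LinearMap.ext regularCharacter_contractL_comul
  ext x
  simpa [characterConv, this] using
    (contractL_contractL_comul (regularCharacter R A) (regularCharacter R A) x).symm

end HopfRegularCharacter

section AntipodeSquared

open Coalgebra HopfAlgebra

lemma apply_one_ne_zero_of_trace_mulRight_comp {F : Type*} [Field F] [IsAlgClosed F] [CharZero F]
    {A : Type*} [Ring A] [Algebra F A] [FiniteDimensional F A] [IsSemisimpleRing A] [Nontrivial A]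
    {l : A →ₗ[F] F} {σ : Module.End F A} (hl : ∀ x, (∀ y, l (y * x) = 0) → x = 0)
    (hlσ : ∀ x y, l (σ x * y) = l (y * x))
    (htr : ∀ b, LinearMap.trace F A (LinearMap.mulRight F b ∘ₗ σ) = l b) {N : ℕ} [NeZero N]
    (hσ : σ ^ N = 1) : l 1 ≠ 0 := by
  obtain ⟨n, d, hd, ⟨e⟩⟩ := IsSemisimpleRing.exists_algEquiv_pi_matrix_of_isAlgClosed F A
  have : Nonempty (Fin n) := by
    by_contra h
    rw [not_nonempty_iff] at h
    exact one_ne_zero (e.injective (Subsingleton.elim (e 1) (e 0)))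
  let E := e.toLinearEquiv
  have hl' (x : BlockMatrix F d) (hx : ∀ y, (l ∘ₗ E.symm) (y * x) = 0) : x = 0 := by
    refine E.symm.map_eq_zero_iff.1 (hl _ fun y => ?_)
    simpa [E] using hx (e y)
  have hlσ' (x y : BlockMatrix F d) : (l ∘ₗ E.symm) (E.conj σ x * y) = (l ∘ₗ E.symm) (y * x) := by
    simp [E, LinearEquiv.conj_apply_apply, hlσ]
  have htr' (b : BlockMatrix F d) :
      LinearMap.trace F _ (LinearMap.mulRight F b ∘ₗ E.conj σ) = (l ∘ₗ E.symm) b := by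
    have : LinearMap.mulRight F b ∘ₗ E.conj σ =
        E.conj (LinearMap.mulRight F (e.symm b) ∘ₗ σ) := by
      ext x
      simp [E, LinearEquiv.conj_apply_apply]
    rw [this, LinearMap.trace_conj', htr]
    rfl
  have hσ' : E.conj σ ^ N = 1 :=
    (map_pow E.conjRingEquiv σ N).symm.trans (by rw [hσ, map_one])
  obtain ⟨v, hv⟩ := exists_unit_eq_blockTrace_mul hl'
  have ne := blockTrace_ne_zero (trace_inv_eq_one hv hlσ' htr') (commute_inv_pow hv hlσ' hσ')
  have apply_one : l 1 = blockTrace F d v := by simpa [E] using hv 1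
  rwa [apply_one]

lemma semiconjBy_pow_apply {R : Type*} [CommSemiring R] {A : Type*} [Semiring A] [Algebra R A]
    {g : A} {φ : Module.End R A} (h : ∀ x, SemiconjBy g x (φ x)) (m : ℕ) (x : A) :
    SemiconjBy (g ^ m) x ((φ ^ m) x) := by
  induction m with
  | zero => simp
  | succ m ih =>
    rw [pow_succ', pow_succ', Module.End.mul_apply]
    exact (h _).mul_left ih

/-- The square of the antipode. -/
def antipodeSq (R : Type*) [CommSemiring R] (A : Type*) [Semiring A] [HopfAlgebra R A] :
    Module.End R A :=
  antipode R ∘ₗ antipode R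

section Antipode

variable {R : Type*} [CommRing R] {A : Type*} [Ring A] [HopfAlgebra R A]

@[simp]
lemma antipodeSq_apply (x : A) : antipodeSq R A x = antipode R (antipode R x) := rfl

lemma contractL_comul_antipode (f : A →ₗ[R] R) (x : A) :
    contractL f (comul (R := R) (antipode R x)) =
      antipode R (contractR (f ∘ₗ antipode R) (comul (R := R) x)) := by
  rw [comul_antipode (ℛ R x), ← (ℛ R x).eq]
  simp

lemma contractR_comul_antipode (f : A →ₗ[R] R) (x : A) :
    contractR f (comul (R := R) (antipode R x)) =
      antipode R (contractL (f ∘ₗ antipode R) (comul (R := R) x)) := by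
  rw [comul_antipode (ℛ R x), ← (ℛ R x).eq]
  simp

lemma regularCharacter_comp_antipodeSq [Module.Free R A] [Module.Finite R A]
    (h : antipodeSq R A * antipodeSq R A = 1) :
    regularCharacter R A ∘ₗ antipodeSq R A = regularCharacter R A := by
  let e : A ≃ₗ[R] A := .ofLinearMap (antipodeSq R A) (antipodeSq R A) h h
  have conj_mulLeft (x : A) :
      e.conj (LinearMap.mulLeft R x) = LinearMap.mulLeft R (antipodeSq R A x) := by
    refine LinearMap.ext fun y => ?_
    obtain ⟨y, rfl⟩ := e.surjective y
    rw [LinearEquiv.conj_apply_apply, e.symm_apply_apply]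
    simp [e, antipode_mul_antidistrib]
  ext x
  rw [LinearMap.comp_apply, regularCharacter_apply, ← conj_mulLeft, LinearMap.trace_conj',
    regularCharacter_apply]

end Antipode

variable {R : Type*} [Field R] {A : Type*} [Ring A] [HopfAlgebra R A] [FiniteDimensional R A]

lemma isOfFinOrder_of_isGroupLikeElem {g : A} (hg : IsGroupLikeElem R g) : IsOfFinOrder g := by
  have : Finite (GroupLike R A) := (linearIndep_groupLikeVal (R := R) (A := A)).finite
  obtain ⟨m, hm, h⟩ := (isOfFinOrder_of_finite (⟨g, hg⟩ : GroupLike R A)).exists_pow_eq_one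
  exact isOfFinOrder_iff_pow_eq_one.2 ⟨m, hm, congr(GroupLike.val $h)⟩

namespace IsNormalizedIntegral

variable {Λ : A} (hΛ : IsNormalizedIntegral R Λ)
include hΛ

lemma regularCharacter_eq_one : regularCharacter R A Λ = 1 := by
  have : LinearMap.mulLeft R Λ = (counit (R := R)).smulRight Λ := by
    ext x; simp [hΛ.mul_right]
  rw [regularCharacter_apply, this, LinearMap.trace_smulRight, hΛ.counit_eq]

lemma exists_antipodeSq_pow_eq_one : ∃ N ≠ 0, antipodeSq R A ^ N = 1 := by
  obtain ⟨l, hl⟩ := hΛ.exists_contractL_eq_one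
  obtain ⟨m, hm, hg⟩ :=
    (isOfFinOrder_of_isGroupLikeElem (hΛ.isGroupLikeElem hl)).exists_pow_eq_one
  refine ⟨2 * m, by omega, LinearMap.ext fun x => ?_⟩
  have := semiconjBy_pow_apply (φ := antipodeSq R A ^ 2) (hΛ.semiconjBy hl) m x
  rw [hg, ← pow_mul] at this
  simpa using this.eq.symm

variable {l : A →ₗ[R] R} (hl : contractL l (comul (R := R) Λ) = 1)
include hl

lemma trace_antipodeSq : LinearMap.trace R A (antipodeSq R A) = l 1 := by
  simpa [antipodeSq] using hΛ.trace_mulRight_comp_antipode_sq hl 1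

lemma trace_antipodeSq_mul_characterConv :
    LinearMap.trace R A (antipodeSq R A * characterConv R A) = l 1 := by
  have sum_mul_characterConv : ∑ i ∈ (ℛ R Λ).index,
      (ℛ R Λ).left i * characterConv R A (antipode R ((ℛ R Λ).right i)) = 1 := by
    have := congr(contractL (regularCharacter R A) $(sum_one_tmul_mul_comul_antipode (ℛ R Λ)))
    simpa [characterConv, contractL_one_tmul_mul, hΛ.antipode_eq,
      hΛ.regularCharacter_eq_one] using this
  calc LinearMap.trace R A (antipodeSq R A * characterConv R A)
      = LinearMap.trace R A (antipode R ∘ₗ characterConv R A ∘ₗ antipode R) :=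
        (LinearMap.trace_comp_comm' (antipode R ∘ₗ characterConv R A) (antipode R) :)
    _ = l 1 := by
        rw [hΛ.trace_antipode_comp hl _ (ℛ R Λ), ← sum_mul_characterConv]
        rfl

variable [CharZero R] [IsAlgClosed R] [IsSemisimpleRing A]

lemma apply_one_ne_zero : l 1 ≠ 0 := by
  obtain ⟨N, hN, pow_eq⟩ := hΛ.exists_antipodeSq_pow_eq_one
  have := hΛ.nontrivial
  have : NeZero N := ⟨hN⟩
  exact apply_one_ne_zero_of_trace_mulRight_comp
    (fun x => hΛ.eq_zero_of_forall_apply_mul_eq_zero hl) (hΛ.apply_antipode_antipode_mul hl)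
    (hΛ.trace_mulRight_comp_antipode_sq hl) pow_eq

lemma contractR_eq_one : contractR l (comul (R := R) Λ) = 1 := by
  refine smul_right_injective A (hΛ.apply_one_ne_zero hl) ?_
  simpa [Algebra.TensorProduct.one_def] using (hΛ.contractR_comul hl 1).symm

omit hl

lemma antipodeSq_mul_self : antipodeSq R A * antipodeSq R A = 1 := by
  obtain ⟨l, hl⟩ := hΛ.exists_contractL_eq_one
  ext x
  simpa [hΛ.contractR_eq_one hl] using (hΛ.semiconjBy hl x).eq.symm

lemma commute_antipodeSq_characterConv : Commute (antipodeSq R A) (characterConv R A) := by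
  refine LinearMap.ext fun x => ?_
  have := regularCharacter_comp_antipodeSq hΛ.antipodeSq_mul_self
  rw [antipodeSq, ← LinearMap.comp_assoc] at this
  simp [characterConv, contractL_comul_antipode, contractR_comul_antipode, this]

/- With `n = dim A`, the operator `P = n⁻¹ S² (χ * ·)` satisfies `P³ = P`, so that `tr S² = n tr P`
is an integral multiple of `n`. -/
lemma exists_trace_antipodeSq_eq_finrank_mul :
    ∃ z : ℤ, LinearMap.trace R A (antipodeSq R A) = Module.finrank R A * z := by
  obtain ⟨l, hl⟩ := hΛ.exists_contractL_eq_one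
  have := hΛ.nontrivial
  have hn : (Module.finrank R A : R) ≠ 0 := Nat.cast_ne_zero.2 Module.finrank_pos.ne'
  set n : R := (Module.finrank R A : R)
  let P := n⁻¹ • (antipodeSq R A * characterConv R A)
  have cube_characterConv : characterConv R A ^ 3 = n ^ 2 • characterConv R A := by
    rw [pow_succ, sq, characterConv_mul_self, smul_mul_assoc, characterConv_mul_self, smul_smul, sq]
  have cube : P ^ 3 = P := by
    rw [smul_pow, hΛ.commute_antipodeSq_characterConv.mul_pow, cube_characterConv,
      pow_succ (antipodeSq R A), sq (antipodeSq R A), hΛ.antipodeSq_mul_self, one_mul,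
      mul_smul_comm, smul_smul]
    congr 1
    field_simp
  refine ⟨Module.finrank R (LinearMap.range (oneProj P)) -
    Module.finrank R (LinearMap.range (oneProj (-P))), ?_⟩
  push_cast
  rw [← trace_eq_finrank_sub_finrank cube, map_smul, smul_eq_mul, mul_inv_cancel_left₀ hn,
    hΛ.trace_antipodeSq_mul_characterConv hl, hΛ.trace_antipodeSq hl]

lemma antipodeSq_eq_one : antipodeSq R A = 1 := by
  obtain ⟨l, hl⟩ := hΛ.exists_contractL_eq_one
  obtain ⟨z, hz⟩ := hΛ.exists_trace_antipodeSq_eq_finrank_mul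
  refine (eq_one_or_eq_neg_one_of_trace_eq_finrank_mul hΛ.antipodeSq_mul_self
    (hΛ.trace_antipodeSq hl ▸ hΛ.apply_one_ne_zero hl) hz).resolve_right fun h => ?_
  have := congr(counit (R := R) ($h 1))
  norm_num at this

end IsNormalizedIntegral

/-- A two-sided cointegral on `A` with the additional properties that it has when `A` is
semisimple over an algebraically closed field of characteristic zero. -/
structure IsHaar (l : A →ₗ[R] R) : Prop where
  contractL_comul : ∀ x, contractL l (comul (R := R) x) = l x • 1
  contractR_comul : ∀ x, contractR l (comul (R := R) x) = l x • 1
  apply_mul_comm : ∀ x y, l (x * y) = l (y * x)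
  apply_one_ne_zero : l 1 ≠ 0
  antipode_antipode : ∀ x : A, antipode R (antipode R x) = x

variable (R A) in
theorem exists_isHaar [CharZero R] [IsAlgClosed R] [IsSemisimpleRing A] :
    ∃ l : A →ₗ[R] R, IsHaar l := by
  obtain ⟨Λ, hΛ⟩ := exists_isNormalizedIntegral R A
  obtain ⟨l, hl⟩ := hΛ.exists_contractL_eq_one
  have antipode_antipode (x : A) : antipode R (antipode R x) = x :=
    congr($hΛ.antipodeSq_eq_one x)
  refine ⟨l, hΛ.contractL_comul hl, fun x => ?_, fun x y => ?_, hΛ.apply_one_ne_zero hl,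
    antipode_antipode⟩
  · rw [hΛ.contractR_comul hl, hΛ.contractR_eq_one hl]
  · rw [← hΛ.apply_antipode_antipode_mul hl, antipode_antipode]

end AntipodeSquared

section Subcoalgebra

open Coalgebra HopfAlgebra

variable {R : Type} [Field R] {A : Type} [Ring A] [HopfAlgebra R A]

lemma IsSubcoalgebra.contractL_mem {X : Submodule R A} (hX : IsSubcoalgebra R A X) {x : A}
    (hx : x ∈ X) (f : A →ₗ[R] R) : contractL f (comul (R := R) x) ∈ X := by
  obtain ⟨t, ht⟩ := hX x hx
  rw [← ht, contractL_map]
  exact SetLike.coe_mem _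

lemma IsSubcoalgebra.contractR_mem {X : Submodule R A} (hX : IsSubcoalgebra R A X) {x : A}
    (hx : x ∈ X) (f : A →ₗ[R] R) : contractR f (comul (R := R) x) ∈ X := by
  obtain ⟨t, ht⟩ := hX x hx
  rw [← ht, contractR_map]
  exact SetLike.coe_mem _

lemma IsSubcoalgebra.contractL_congr {X : Submodule R A} (hX : IsSubcoalgebra R A X) {x : A}
    (hx : x ∈ X) {f g : A →ₗ[R] R} (hfg : ∀ y ∈ X, f y = g y) :
    contractL f (comul (R := R) x) = contractL g (comul (R := R) x) := by
  obtain ⟨t, ht⟩ := hX x hx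
  have hfgX : f ∘ₗ X.subtype = g ∘ₗ X.subtype := LinearMap.ext fun y => hfg y y.2
  rw [← ht, contractL_map, contractL_map, hfgX]

lemma IsSubcoalgebra.contractR_congr {X : Submodule R A} (hX : IsSubcoalgebra R A X) {x : A}
    (hx : x ∈ X) {f g : A →ₗ[R] R} (hfg : ∀ y ∈ X, f y = g y) :
    contractR f (comul (R := R) x) = contractR g (comul (R := R) x) := by
  obtain ⟨t, ht⟩ := hX x hx
  have hfgX : f ∘ₗ X.subtype = g ∘ₗ X.subtype := LinearMap.ext fun y => hfg y y.2
  rw [← ht, contractR_map, contractR_map, hfgX]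

lemma IsSubcoalgebra.contractL_eq_zero {X : Submodule R A} (hX : IsSubcoalgebra R A X) {x : A}
    (hx : x ∈ X) {f : A →ₗ[R] R} (hf : ∀ y ∈ X, f y = 0) :
    contractL f (comul (R := R) x) = 0 := by
  rw [hX.contractL_congr hx (g := 0) hf, map_zero, LinearMap.zero_apply]

lemma IsSubcoalgebra.contractR_eq_zero {X : Submodule R A} (hX : IsSubcoalgebra R A X) {x : A}
    (hx : x ∈ X) {f : A →ₗ[R] R} (hf : ∀ y ∈ X, f y = 0) :
    contractR f (comul (R := R) x) = 0 := by
  rw [hX.contractR_congr hx (g := 0) hf, map_zero, LinearMap.zero_apply]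

lemma IsSubcoalgebra.mul {X Y : Submodule R A} (hX : IsSubcoalgebra R A X)
    (hY : IsSubcoalgebra R A Y) : IsSubcoalgebra R A (X * Y) := by
  intro z hz
  induction hz using Submodule.mul_induction_on' with
  | add x hx y hy hx' hy' => rw [map_add]; exact add_mem hx' hy'
  | mem_mul_mem x hx y hy =>
    obtain ⟨s, hs⟩ := hX x hx
    obtain ⟨t, ht⟩ := hY y hy
    rw [Bialgebra.comul_mul, ← hs, ← ht]
    clear hs ht
    induction s with
    | zero => simp
    | add s s' h h' => rw [map_add, add_mul]; exact add_mem h h'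
    | tmul a b =>
      induction t with
      | zero => simp
      | add s s' h h' => rw [map_add, mul_add]; exact add_mem h h'
      | tmul c d =>
        exact ⟨⟨a * c, Submodule.mul_mem_mul a.2 c.2⟩ ⊗ₜ ⟨b * d, Submodule.mul_mem_mul b.2 d.2⟩,
          by simp⟩

lemma isSubcoalgebra_span_singleton {g : A} (hg : comul (R := R) g = g ⊗ₜ[R] g) :
    IsSubcoalgebra R A (Submodule.span R {g}) := by
  intro x hx
  obtain ⟨a, rfl⟩ := Submodule.mem_span_singleton.1 hx
  rw [map_smul, hg]
  exact Submodule.smul_mem _ _ ⟨⟨g, Submodule.mem_span_singleton_self g⟩ ⊗ₜ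
    ⟨g, Submodule.mem_span_singleton_self g⟩, by simp⟩

lemma contractR_contractR_comul (f g : A →ₗ[R] R) (x : A) :
    contractR (f ∘ₗ contractR g ∘ₗ comul (R := R)) (comul (R := R) x) =
      contractR f (comul (R := R) (contractR g (comul (R := R) x))) := by
  refine Module.eval_apply_injective R (LinearMap.ext fun p => ?_)
  simp only [Module.Dual.eval_apply]
  rw [← apply_contractL, ← apply_contractL, contractL_comul_contractR_comul]
  rfl

/-- The action of the convolution algebra `A*` on a subcoalgebra `C` by right contraction of the
comultiplication. -/
def IsSubcoalgebra.dualAction {C : Submodule R A} (hC : IsSubcoalgebra R A C) :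
    Module.Dual R A →ₗ[R] Module.End R C where
  toFun f := (contractR f ∘ₗ comul (R := R)).restrict fun _ hx => hC.contractR_mem hx f
  map_add' f g := by ext; simp
  map_smul' a f := by ext; simp

lemma IsSubcoalgebra.coe_dualAction {C : Submodule R A} (hC : IsSubcoalgebra R A C)
    (f : Module.Dual R A) (x : C) :
    (hC.dualAction f x : A) = contractR f (comul (R := R) (x : A)) := rfl

lemma IsSubcoalgebra.dualAction_mul {C : Submodule R A} (hC : IsSubcoalgebra R A C)
    (f g : Module.Dual R A) :
    hC.dualAction f * hC.dualAction g =
      hC.dualAction (f ∘ₗ contractR g ∘ₗ comul (R := R)) := by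
  ext x
  rw [Module.End.mul_apply, coe_dualAction, coe_dualAction, coe_dualAction,
    contractR_contractR_comul]

variable [FiniteDimensional R A]

lemma isSubcoalgebra_of_contract {X : Submodule R A}
    (hL : ∀ x ∈ X, ∀ f : A →ₗ[R] R, contractL f (comul (R := R) x) ∈ X)
    (hR : ∀ x ∈ X, ∀ f : A →ₗ[R] R, contractR f (comul (R := R) x) ∈ X) :
    IsSubcoalgebra R A X := by
  intro x hx
  obtain ⟨p, hp⟩ := LinearMap.exists_leftInverse_of_injective X.subtype X.ker_subtype
  have hp' : ∀ y ∈ X, X.subtype (p y) = y := fun y hy =>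
    congrArg X.subtype (LinearMap.congr_fun hp ⟨y, hy⟩)
  refine ⟨TensorProduct.map p p (comul x), eq_of_contractL_eq fun f => ?_⟩
  rw [contractL_map, contractL_map, hp' _ (hL x hx _)]
  refine Module.eval_apply_injective R (LinearMap.ext fun g => ?_)
  simp only [Module.Dual.eval_apply, apply_contractL]
  exact congrArg f (hp' _ (hR x hx g))

lemma IsSubcoalgebra.inf {X Y : Submodule R A} (hX : IsSubcoalgebra R A X)
    (hY : IsSubcoalgebra R A Y) : IsSubcoalgebra R A (X ⊓ Y) :=
  isSubcoalgebra_of_contract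
    (fun _ hx f => ⟨hX.contractL_mem hx.1 f, hY.contractL_mem hx.2 f⟩)
    (fun _ hx f => ⟨hX.contractR_mem hx.1 f, hY.contractR_mem hx.2 f⟩)

lemma isSubcoalgebra_sSup {S : Set (Submodule R A)} (hS : ∀ X ∈ S, IsSubcoalgebra R A X) :
    IsSubcoalgebra R A (sSup S) := by
  have map_mem (φ : A →ₗ[R] A) (hφ : ∀ X ∈ S, ∀ x ∈ X, φ x ∈ X) : sSup S ≤ (sSup S).comap φ :=
    sSup_le fun X hX x hx => (le_sSup hX : X ≤ sSup S) (hφ X hX x hx)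
  exact isSubcoalgebra_of_contract
    (fun x hx f => map_mem (contractL f ∘ₗ comul (R := R))
      (fun X hX x hx => (hS X hX).contractL_mem hx f) hx)
    (fun x hx f => map_mem (contractR f ∘ₗ comul (R := R))
      (fun X hX x hx => (hS X hX).contractR_mem hx f) hx)

lemma IsSubcoalgebra.exists_isSimpleSubcoalgebra_le {X : Submodule R A}
    (hX : IsSubcoalgebra R A X) (h0 : X ≠ ⊥) : ∃ D ≤ X, IsSimpleSubcoalgebra R A D := by
  obtain ⟨D, ⟨hDX, hD, hD0⟩, hmin⟩ := WellFounded.has_min (wellFounded_lt (α := Submodule R A))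
    {D | D ≤ X ∧ IsSubcoalgebra R A D ∧ D ≠ ⊥} ⟨X, le_rfl, hX, h0⟩
  refine ⟨D, hDX, hD, hD0, fun E hED hE hE0 => ?_⟩
  by_contra hne
  exact hmin E ⟨hED.trans hDX, hE, hE0⟩ (lt_of_le_of_ne hED hne)

lemma IsSimpleSubcoalgebra.le_of_not_disjoint {C X : Submodule R A}
    (hC : IsSimpleSubcoalgebra R A C) (hX : IsSubcoalgebra R A X) (h : ¬ Disjoint C X) : C ≤ X :=
  inf_eq_left.1 (hC.2.2 _ inf_le_left (hC.1.inf hX) fun h0 => h (disjoint_iff.2 h0))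

/-- The character of a subcoalgebra `C`: the element of `A` at which a functional `f` takes as
value the trace of its action on `C`. -/
def IsSubcoalgebra.character {C : Submodule R A} (hC : IsSubcoalgebra R A C) : A :=
  (Module.evalEquiv R A).symm (LinearMap.trace R C ∘ₗ hC.dualAction)

lemma IsSubcoalgebra.apply_character {C : Submodule R A} (hC : IsSubcoalgebra R A C)
    (f : Module.Dual R A) : f hC.character = LinearMap.trace R C (hC.dualAction f) := by
  rw [character, Module.apply_evalEquiv_symm_apply, LinearMap.comp_apply]

lemma IsSubcoalgebra.character_mem {C : Submodule R A} (hC : IsSubcoalgebra R A C) :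
    hC.character ∈ C := by
  by_contra hmem
  obtain ⟨f, hf, hfC⟩ := Submodule.exists_le_ker_of_notMem hmem
  have hρ : hC.dualAction f = 0 := by
    ext x
    rw [coe_dualAction]
    exact hC.contractR_eq_zero x.2 fun y hy => hfC hy
  exact hf (by rw [apply_character, hρ, map_zero])

lemma IsSubcoalgebra.isCocomm_character {C : Submodule R A} (hC : IsSubcoalgebra R A C) :
    IsCocomm R A hC.character := by
  have apply_contractR (f g : Module.Dual R A) :
      f (contractR g (comul (R := R) hC.character)) =
        LinearMap.trace R C (hC.dualAction f * hC.dualAction g) := by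
    rw [dualAction_mul, ← apply_character]
    rfl
  refine eq_of_contractL_eq fun f => ?_
  rw [← contractR_comm, TensorProduct.comm_comm]
  refine Module.eval_apply_injective R (LinearMap.ext fun g => ?_)
  simp only [Module.Dual.eval_apply]
  rw [apply_contractL, apply_contractR, apply_contractR, LinearMap.trace_mul_comm]

lemma IsSubcoalgebra.counit_character {C : Submodule R A} (hC : IsSubcoalgebra R A C) :
    counit (R := R) hC.character = Module.finrank R C := by
  have hρ : hC.dualAction (counit (R := R)) = LinearMap.id := by
    ext x
    rw [coe_dualAction, contractR_counit_comul]
    rfl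
  rw [apply_character, hρ, LinearMap.trace_id]

lemma IsSubcoalgebra.exists_isCocomm [CharZero R] {C : Submodule R A}
    (hC : IsSubcoalgebra R A C) (h0 : C ≠ ⊥) :
    ∃ c ∈ C, IsCocomm R A c ∧ counit (R := R) c ≠ 0 := by
  have : Nontrivial C := (Submodule.nontrivial_iff_ne_bot).2 h0
  refine ⟨hC.character, hC.character_mem, hC.isCocomm_character, ?_⟩
  rw [hC.counit_character, Nat.cast_ne_zero]
  exact Module.finrank_pos.ne'

end Subcoalgebra

section HaarForm

open Coalgebra HopfAlgebra

variable {R : Type} [Field R] {A : Type} [Ring A] [HopfAlgebra R A]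

/-- The bilinear form `(x, y) ↦ l(x S(y))` attached to a cointegral `l`, for which distinct simple
subcoalgebras are orthogonal. -/
def haarForm (l : A →ₗ[R] R) : LinearMap.BilinForm R A :=
  ((LinearMap.mul R A).compr₂ l).compl₂ (antipode R)

lemma haarForm_apply (l : A →ₗ[R] R) (x y : A) : haarForm l x y = l (x * antipode R y) := rfl

variable {l : A →ₗ[R] R} {K : Subalgebra R A} {X Y C D : Submodule R A}

lemma IsHaar.apply_antipode (hl : IsHaar l) (x : A) : l (antipode R x) = l x := by
  have hS : contractR (l ∘ₗ antipode R) (comul (R := R) x) = l (antipode R x) • 1 := by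
    rw [← hl.antipode_antipode (contractR _ _), ← contractL_comul_antipode, hl.contractL_comul,
      map_smul, antipode_one]
  have h := apply_contractL l (l ∘ₗ antipode R) (comul (R := R) x)
  rw [hS, hl.contractL_comul, map_smul, map_smul, LinearMap.comp_apply, antipode_one,
    smul_eq_mul, smul_eq_mul] at h
  exact (mul_right_cancel₀ hl.apply_one_ne_zero h).symm

lemma IsHaar.haarForm_comm (hl : IsHaar l) (x y : A) : haarForm l x y = haarForm l y x := by
  rw [haarForm_apply, haarForm_apply, ← hl.apply_antipode, antipode_mul_antidistrib,
    hl.antipode_antipode]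

lemma IsHaar.haarForm_mul_left (hl : IsHaar l) (x a y : A) :
    haarForm l (x * a) y = haarForm l x (y * antipode R a) := by
  rw [haarForm_apply, haarForm_apply, antipode_mul_antidistrib, hl.antipode_antipode, mul_assoc]

lemma IsHaar.contractR_haarForm (hl : IsHaar l) (x y : A) :
    contractR ((haarForm l).flip y) (comul (R := R) x) =
      contractL (haarForm l x) (comul (R := R) y) := by
  have hflip : (haarForm l).flip y = l ∘ₗ LinearMap.mulRight R (antipode R y) := rfl
  rw [hflip, ← contractR_mul_one_tmul, ← sum_comul_antipode_mul_tmul_one (ℛ R y),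
    Finset.mul_sum, map_sum]
  simp only [← mul_assoc, ← Bialgebra.comul_mul, contractR_mul_tmul_one, hl.contractR_comul]
  conv_rhs => rw [← (ℛ R y).eq]
  simp [haarForm_apply]

lemma IsHaar.contractL_haarForm (hl : IsHaar l) (x y : A) :
    contractL ((haarForm l).flip y) (comul (R := R) x) =
      contractR (haarForm l x) (comul (R := R) y) := by
  have hflip : (haarForm l).flip y = l ∘ₗ LinearMap.mulLeft R (antipode R y) :=
    LinearMap.ext fun z => hl.apply_mul_comm z _
  rw [hflip, ← contractL_tmul_one_mul, ← sum_one_tmul_mul_comul_antipode (ℛ R y),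
    Finset.sum_mul, map_sum]
  simp only [mul_assoc, ← Bialgebra.comul_mul, contractL_one_tmul_mul, hl.contractL_comul]
  conv_rhs => rw [← (ℛ R y).eq]
  simp [haarForm_apply, hl.apply_mul_comm x]

lemma IsHaar.counit_eq_zero_of_haarForm_eq_zero (hl : IsHaar l)
    (hX : IsSubcoalgebra R A X) (h : ∀ x ∈ X, ∀ y ∈ X, haarForm l x y = 0) {x : A} (hx : x ∈ X) :
    counit (R := R) x = 0 := by
  have apply_mul_antipode : ∀ t ∈ LinearMap.range (TensorProduct.map X.subtype X.subtype),
      l (LinearMap.mul' R A ((antipode R).lTensor A t)) = 0 := by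
    rintro _ ⟨t, rfl⟩
    induction t with
    | zero => simp
    | add s t hs ht => simp only [map_add, hs, ht, add_zero]
    | tmul a b => simpa [haarForm_apply] using h a a.2 b b.2
  have hε := apply_mul_antipode _ (hX x hx)
  rw [mul_antipode_lTensor_comul_apply, Algebra.algebraMap_eq_smul_one, map_smul,
    smul_eq_mul] at hε
  exact (mul_eq_zero.1 hε).resolve_right hl.apply_one_ne_zero

lemma IsHaar.eq_bot_of_haarForm_eq_zero (hl : IsHaar l)
    (hX : IsSubcoalgebra R A X) (h : ∀ x ∈ X, ∀ y ∈ X, haarForm l x y = 0) : X = ⊥ := by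
  rw [Submodule.eq_bot_iff]
  intro x hx
  rw [← contractL_counit_comul (R := R) x]
  exact hX.contractL_eq_zero hx fun y hy => hl.counit_eq_zero_of_haarForm_eq_zero hX h hy

lemma IsHaar.haarForm_eq_zero_of_disjoint (hl : IsHaar l)
    (hX : IsSubcoalgebra R A X) (hY : IsSubcoalgebra R A Y) (h : Disjoint X Y) {x y : A}
    (hx : x ∈ X) (hy : y ∈ Y) : haarForm l x y = 0 := by
  have hXY : contractL (haarForm l x) (comul (R := R) y) = 0 :=
    Submodule.disjoint_def.1 h _ (hl.contractR_haarForm x y ▸ hX.contractR_mem hx _)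
      (hY.contractL_mem hy _)
  rw [← contractR_counit_comul (R := R) y, ← apply_contractL, hXY, map_zero]

variable (K X) in
lemma mul_toSubmodule_mul_toSubmodule :
    X * K.toSubmodule * K.toSubmodule = X * K.toSubmodule := by
  rw [mul_assoc, K.isIdempotentElem_toSubmodule.eq]

variable (K X) in
lemma le_mul_toSubmodule : X ≤ X * K.toSubmodule := fun x hx => by
  simpa using Submodule.mul_mem_mul hx (show (1 : A) ∈ K.toSubmodule from one_mem K)

lemma IsHaar.haarForm_eq_zero_of_disjoint_mul_toSubmodule (hl : IsHaar l)
    (hK : IsHopfSubalgebra R A K) (hC : IsSubcoalgebra R A C) (hX : IsSubcoalgebra R A X)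
    (h : Disjoint C (X * K.toSubmodule)) {x y : A} (hx : x ∈ C * K.toSubmodule)
    (hy : y ∈ X * K.toSubmodule) : haarForm l x y = 0 := by
  induction hx using Submodule.mul_induction_on' with
  | add u _ v _ hu hv => rw [map_add, LinearMap.add_apply, hu, hv, add_zero]
  | mem_mul_mem c hc a ha =>
    rw [hl.haarForm_mul_left]
    refine hl.haarForm_eq_zero_of_disjoint hC (hX.mul hK.1) h hc ?_
    rw [← mul_toSubmodule_mul_toSubmodule]
    exact Submodule.mul_mem_mul hy (hK.2 a ha)

variable [FiniteDimensional R A]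

lemma IsHaar.isSubcoalgebra_orthogonal (hl : IsHaar l) (hX : IsSubcoalgebra R A X) :
    IsSubcoalgebra R A ((haarForm l).orthogonal X) := by
  refine isSubcoalgebra_of_contract (fun y hy f x hx => ?_) (fun y hy f x hx => ?_)
  · rw [apply_contractL, ← hl.contractL_haarForm,
      hX.contractL_eq_zero hx (f := (haarForm l).flip y) hy, map_zero]
  · rw [← apply_contractL, ← hl.contractR_haarForm,
      hX.contractR_eq_zero hx (f := (haarForm l).flip y) hy, map_zero]

lemma IsHaar.disjoint_orthogonal (hl : IsHaar l) (hX : IsSubcoalgebra R A X) :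
    Disjoint X ((haarForm l).orthogonal X) :=
  disjoint_iff.2 <| hl.eq_bot_of_haarForm_eq_zero (hX.inf (hl.isSubcoalgebra_orthogonal hX))
    fun x hx _ hy => hy.2 x hx.1

lemma IsHaar.isCompl_orthogonal (hl : IsHaar l) (hX : IsSubcoalgebra R A X) :
    IsCompl X ((haarForm l).orthogonal X) :=
  (LinearMap.BilinForm.isCompl_orthogonal_iff_disjoint
    fun x y h => (hl.haarForm_comm y x).trans h).2 (hl.disjoint_orthogonal hX)

lemma IsHaar.eq_zero_of_forall_haarForm_eq_zero (hl : IsHaar l) (hX : IsSubcoalgebra R A X)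
    {x : A} (hx : x ∈ X) (h : ∀ y ∈ X, haarForm l x y = 0) : x = 0 :=
  Submodule.disjoint_def.1 (hl.disjoint_orthogonal hX) x hx
    fun y hy => (hl.haarForm_comm y x).trans (h y hy)

lemma IsHaar.exists_haarForm_eq (hl : IsHaar l) (hX : IsSubcoalgebra R A X) (f : A →ₗ[R] R) :
    ∃ x ∈ X, ∀ y ∈ X, haarForm l x y = f y := by
  have hB : ((haarForm l).restrict X).Nondegenerate :=
    LinearMap.BilinForm.nondegenerate_restrict_of_disjoint_orthogonal _
      (fun x y h => (hl.haarForm_comm y x).trans h) (hl.disjoint_orthogonal hX)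
  refine ⟨(LinearMap.BilinForm.toDual _ hB).symm (f ∘ₗ X.subtype), SetLike.coe_mem _,
    fun y hy => ?_⟩
  exact LinearMap.BilinForm.apply_toDual_symm_apply (hB := hB) (f ∘ₗ X.subtype) ⟨y, hy⟩

lemma IsHaar.sSup_isSimpleSubcoalgebra (hl : IsHaar l) :
    sSup {C : Submodule R A | IsSimpleSubcoalgebra R A C} = ⊤ := by
  set X := sSup {C : Submodule R A | IsSimpleSubcoalgebra R A C}
  have hX : IsSubcoalgebra R A X := isSubcoalgebra_sSup fun C hC => hC.1
  have hperp : (haarForm l).orthogonal X = ⊥ := by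
    by_contra h0
    obtain ⟨D, hD, hDs⟩ :=
      (hl.isSubcoalgebra_orthogonal hX).exists_isSimpleSubcoalgebra_le h0
    exact hDs.2.1 (disjoint_self.1 ((hl.disjoint_orthogonal hX).mono (le_sSup hDs) hD))
  simpa [hperp] using (hl.isCompl_orthogonal hX).sup_eq_top

lemma IsHaar.mul_toSubmodule_le (hl : IsHaar l) (hK : IsHopfSubalgebra R A K)
    (hC : IsSimpleSubcoalgebra R A C) (hX : IsSubcoalgebra R A X)
    (h : ¬ Disjoint (C * K.toSubmodule) (X * K.toSubmodule)) :
    C * K.toSubmodule ≤ X * K.toSubmodule := by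
  have hXK : IsSubcoalgebra R A (X * K.toSubmodule) := hX.mul hK.1
  suffices C ≤ X * K.toSubmodule from
    (mul_le_mul' this le_rfl).trans (mul_toSubmodule_mul_toSubmodule K X).le
  refine hC.le_of_not_disjoint hXK fun hdisj => h (disjoint_iff.2 ?_)
  exact hl.eq_bot_of_haarForm_eq_zero ((hC.1.mul hK.1).inf hXK) fun x hx y hy =>
    hl.haarForm_eq_zero_of_disjoint_mul_toSubmodule hK hC.1 hX hdisj hx.1 hy.2

lemma IsHaar.mul_toSubmodule_eq (hl : IsHaar l) (hK : IsHopfSubalgebra R A K)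
    (hC : IsSimpleSubcoalgebra R A C) (hD : IsSimpleSubcoalgebra R A D)
    (h : ¬ Disjoint (C * K.toSubmodule) (D * K.toSubmodule)) :
    C * K.toSubmodule = D * K.toSubmodule :=
  le_antisymm (hl.mul_toSubmodule_le hK hC hD.1 h)
    (hl.mul_toSubmodule_le hK hD hC.1 fun h' => h h'.symm)

end HaarForm

section Cocommutative

open Coalgebra HopfAlgebra

variable {R : Type} [Field R] {A : Type} [Ring A] [HopfAlgebra R A]

lemma IsCocomm.contractL_eq_contractR {x : A} (hx : IsCocomm R A x) (f : A →ₗ[R] R) :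
    contractL f (comul (R := R) x) = contractR f (comul (R := R) x) := by
  rw [← contractR_comm, hx]

lemma IsCocomm.mul {x y : A} (hx : IsCocomm R A x) (hy : IsCocomm R A y) :
    IsCocomm R A (x * y) := by
  have h := map_mul (Algebra.TensorProduct.comm R A A) (comul (R := R) x) (comul (R := R) y)
  have hx' : Algebra.TensorProduct.comm R A A (comul (R := R) x) = comul (R := R) x := hx
  have hy' : Algebra.TensorProduct.comm R A A (comul (R := R) y) = comul (R := R) y := hy
  rw [hx', hy', ← Bialgebra.comul_mul] at h
  exact h

lemma IsCocomm.sub {x y : A} (hx : IsCocomm R A x) (hy : IsCocomm R A y) :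
    IsCocomm R A (x - y) := by
  rw [IsCocomm, map_sub, map_sub, hx, hy]

lemma IsSubcoalgebra.exists_repr {X : Submodule R A} (hX : IsSubcoalgebra R A X) {x : A}
    (hx : x ∈ X) :
    ∃ 𝓡 : Repr R x (X × X), ∀ i ∈ 𝓡.index, 𝓡.left i ∈ X ∧ 𝓡.right i ∈ X := by
  obtain ⟨t, ht⟩ := hX x hx
  obtain ⟨s, rfl⟩ := TensorProduct.exists_finset t
  exact ⟨⟨s, fun i => i.1, fun i => i.2, by simpa using ht⟩, fun i _ => ⟨i.1.2, i.2.2⟩⟩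

variable {l : A →ₗ[R] R} {K : Subalgebra R A} {Λ x : A}

lemma IsHaar.contractL_mulLeft_comul_integral (hl : IsHaar l) (hK : IsHopfSubalgebra R A K)
    (hΛ : IsIdempotentIntegral R A K Λ) (hx : x ∈ K) :
    contractL (l ∘ₗ LinearMap.mulLeft R x) (comul (R := R) Λ) = l Λ • antipode R x := by
  obtain ⟨𝓡, h𝓡⟩ := hK.1.exists_repr (hK.2 x hx)
  have h := one_tmul_mul_comul_eq 𝓡 fun i hi => (hΛ.2.2 _ (h𝓡 i hi).2).1
  rw [hl.antipode_antipode] at h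
  rw [← contractL_tmul_one_mul, ← h, contractL_one_tmul_mul, hl.contractL_comul, mul_smul_comm,
    mul_one]

lemma IsHaar.contractR_mulRight_comul_integral (hl : IsHaar l) (hK : IsHopfSubalgebra R A K)
    (hΛ : IsIdempotentIntegral R A K Λ) (hx : x ∈ K) :
    contractR (l ∘ₗ LinearMap.mulRight R x) (comul (R := R) Λ) = l Λ • antipode R x := by
  obtain ⟨𝓡, h𝓡⟩ := hK.1.exists_repr (hK.2 x hx)
  have h := comul_mul_tmul_one_eq 𝓡 fun i hi => (hΛ.2.2 _ (h𝓡 i hi).1).2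
  rw [hl.antipode_antipode] at h
  rw [← contractR_mul_one_tmul, ← h, contractR_mul_tmul_one, hl.contractR_comul, smul_mul_assoc,
    one_mul]

variable [FiniteDimensional R A] {C : Submodule R A}

lemma isCocomm_of_contract
    (h : ∀ f : A →ₗ[R] R, contractL f (comul (R := R) x) = contractR f (comul (R := R) x)) :
    IsCocomm R A x :=
  eq_of_contractL_eq fun f => by
    rw [← contractR_comm, TensorProduct.comm_comm, h]

lemma IsHaar.isCocomm_integral (hl : IsHaar l) (hK : IsHopfSubalgebra R A K)
    (hΛ : IsIdempotentIntegral R A K Λ) : IsCocomm R A Λ := by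
  refine isCocomm_of_contract fun f => ?_
  obtain ⟨x, hx, hxf⟩ := hl.exists_haarForm_eq hK.1 (f ∘ₗ antipode R)
  have hfL (y : A) (hy : y ∈ K.toSubmodule) : f y = (l ∘ₗ LinearMap.mulLeft R x) y := by
    simpa [haarForm_apply, hl.antipode_antipode] using (hxf _ (hK.2 y hy)).symm
  have hfR (y : A) (hy : y ∈ K.toSubmodule) : f y = (l ∘ₗ LinearMap.mulRight R x) y :=
    (hfL y hy).trans (hl.apply_mul_comm x y)
  rw [hK.1.contractL_congr hΛ.1 hfL, hK.1.contractR_congr hΛ.1 hfR,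
    hl.contractL_mulLeft_comul_integral hK hΛ hx, hl.contractR_mulRight_comul_integral hK hΛ hx]

lemma isSubcoalgebra_ker_contractL_sub (f : A →ₗ[R] R) (t : R)
    (hf : ∀ y, contractR f (comul (R := R) y) = contractL f (comul (R := R) y)) :
    IsSubcoalgebra R A (LinearMap.ker (contractL f ∘ₗ comul (R := R) - t • LinearMap.id)) := by
  have mem_ker (y : A) : y ∈ LinearMap.ker (contractL f ∘ₗ comul (R := R) - t • LinearMap.id) ↔
      contractL f (comul (R := R) y) = t • y := by
    rw [LinearMap.mem_ker, LinearMap.sub_apply, sub_eq_zero]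
    rfl
  refine isSubcoalgebra_of_contract (fun y hy g => ?_) (fun y hy g => ?_)
  · rw [mem_ker] at hy ⊢
    rw [← hf, ← contractL_comul_contractR_comul, hf, hy, map_smul, map_smul]
  · rw [mem_ker] at hy ⊢
    rw [contractL_comul_contractR_comul, hy, map_smul, map_smul]

/- Schur's lemma for `C`: pairing with a cocommutative element commutes with the coaction, so an
eigenspace of it in `C` is a subcoalgebra. -/
lemma IsHaar.exists_haarForm_eq_mul_counit [IsAlgClosed R] (hl : IsHaar l)
    (hC : IsSimpleSubcoalgebra R A C) (hx : IsCocomm R A x) :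
    ∃ t : R, ∀ y ∈ C, haarForm l x y = t * counit (R := R) y := by
  have hT (y : A) : contractR (haarForm l x) (comul (R := R) y) =
      contractL (haarForm l x) (comul (R := R) y) := by
    rw [← hl.contractL_haarForm, ← hl.contractR_haarForm, hx.contractL_eq_contractR]
  have : Nontrivial C := Submodule.nontrivial_iff_ne_bot.2 hC.2.1
  obtain ⟨t, ht⟩ := Module.End.exists_eigenvalue <|
    (contractL (haarForm l x) ∘ₗ comul (R := R)).restrict fun y hy => hC.1.contractL_mem hy _
  obtain ⟨v, hv⟩ := ht.exists_hasEigenvector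
  have hCE : C ≤ LinearMap.ker (contractL (haarForm l x) ∘ₗ comul (R := R) - t • LinearMap.id) :=
    hC.le_of_not_disjoint (isSubcoalgebra_ker_contractL_sub _ t hT) fun hdisj =>
      hv.2 <| Subtype.ext <| Submodule.disjoint_def.1 hdisj v v.2 <|
        sub_eq_zero.2 <| congrArg Subtype.val hv.apply_eq_smul
  refine ⟨t, fun y hy => ?_⟩
  have hy' : contractL (haarForm l x) (comul (R := R) y) = t • y := sub_eq_zero.1 (hCE hy)
  rw [← smul_eq_mul, ← map_smul, ← hy', apply_contractL, contractR_counit_comul]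

lemma IsHaar.exists_haarForm_eq_mul_counit_coset [IsAlgClosed R] (hl : IsHaar l)
    (hK : IsHopfSubalgebra R A K) (hC : IsSimpleSubcoalgebra R A C)
    (hx : IsCocomm R A x) (hxK : ∀ a ∈ K, x * a = counit (R := R) a • x) :
    ∃ t : R, ∀ y ∈ C * K.toSubmodule, haarForm l x y = t * counit (R := R) y := by
  obtain ⟨t, ht⟩ := hl.exists_haarForm_eq_mul_counit hC hx
  refine ⟨t, fun y hy => ?_⟩
  induction hy using Submodule.mul_induction_on' with
  | add u _ v _ hu hv => rw [map_add, map_add, hu, hv, mul_add]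
  | mem_mul_mem c hc a ha =>
    rw [hl.haarForm_comm, hl.haarForm_mul_left, hxK _ (hK.2 a ha), map_smul, hl.haarForm_comm,
      ht c hc, Bialgebra.counit_mul, counit_antipode, smul_eq_mul]
    ring

/- Both `z` and `c * Λ` pair with `C * K` through multiples of the counit, hence are linearly
dependent. -/
lemma IsHaar.eq_zero_of_isCocomm_of_counit_eq_zero [CharZero R] [IsAlgClosed R] (hl : IsHaar l)
    (hK : IsHopfSubalgebra R A K) (hΛ : IsIdempotentIntegral R A K Λ)
    (hC : IsSimpleSubcoalgebra R A C) {z : A} (hzC : z ∈ C * K.toSubmodule)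
    (hz : IsCocomm R A z) (hzK : ∀ a ∈ K, z * a = counit (R := R) a • z)
    (hz0 : counit (R := R) z = 0) : z = 0 := by
  obtain ⟨c, hcC, hc, hc0⟩ := hC.1.exists_isCocomm hC.2.1
  have hCK := hC.1.mul hK.1
  have hcΛ : c * Λ ∈ C * K.toSubmodule := Submodule.mul_mem_mul hcC hΛ.1
  obtain ⟨t, ht⟩ := hl.exists_haarForm_eq_mul_counit_coset hK hC hz hzK
  obtain ⟨s, hs⟩ := hl.exists_haarForm_eq_mul_counit_coset hK hC
    (hc.mul (hl.isCocomm_integral hK hΛ)) fun a ha => by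
      rw [mul_assoc, (hΛ.2.2 a ha).2, mul_smul_comm]
  have hdep : s • z - t • (c * Λ) = 0 :=
    hl.eq_zero_of_forall_haarForm_eq_zero hCK
      (sub_mem (Submodule.smul_mem _ _ hzC) (Submodule.smul_mem _ _ hcΛ)) fun y hy => by
        simp only [map_sub, map_smul, LinearMap.sub_apply, LinearMap.smul_apply, ht y hy, hs y hy,
          smul_eq_mul]
        ring
  have ht0 : t = 0 := by
    have hε := congrArg (counit (R := R)) hdep
    rw [map_sub, map_smul, map_smul, hz0, Bialgebra.counit_mul, hΛ.2.1, smul_zero, map_zero,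
      mul_one, zero_sub, neg_eq_zero, smul_eq_mul] at hε
    exact (mul_eq_zero.1 hε).resolve_right hc0
  exact hl.eq_zero_of_forall_haarForm_eq_zero hCK hzC fun y hy => by rw [ht y hy, ht0, zero_mul]

end Cocommutative

section GroupLike

open Coalgebra HopfAlgebra

variable {R : Type} [Field R] {A : Type} [Ring A] [HopfAlgebra R A] {l : A →ₗ[R] R}
  {K : Subalgebra R A} {C : Submodule R A} {G : Set A} {g h Λ : A}

lemma isGroupLikeElem_of_comul_eq (h0 : g ≠ 0) (hg : comul (R := R) g = g ⊗ₜ[R] g) :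
    IsGroupLikeElem R g := by
  refine ⟨?_, hg⟩
  have h := contractL_counit_comul (R := R) g
  rw [hg, contractL_tmul] at h
  exact smul_left_injective R h0 (h.trans (one_smul R g).symm)

lemma IsGrouplikeSubgroup.isGroupLikeElem (hG : IsGrouplikeSubgroup R A G) (hg : g ∈ G) :
    IsGroupLikeElem R g :=
  isGroupLikeElem_of_comul_eq (hG.2.1 g hg).1 (hG.2.1 g hg).2

lemma isCocomm_of_isGroupLikeElem (hg : IsGroupLikeElem R g) : IsCocomm R A g := by
  rw [IsCocomm, hg.comul_eq_tmul_self, TensorProduct.comm_tmul]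

lemma isSimpleSubcoalgebra_span_singleton (hg : IsGroupLikeElem R g) :
    IsSimpleSubcoalgebra R A (Submodule.span R {g}) := by
  have hatom : IsAtom (Submodule.span R {g}) := nonzero_span_atom g hg.ne_zero
  exact ⟨isSubcoalgebra_span_singleton hg.comul_eq_tmul_self, hatom.1,
    fun D hD _ hD0 => (hatom.le_iff.1 hD).resolve_left hD0⟩

lemma span_singleton_mul_span_singleton_mul (hgh : g * h = 1) (X : Submodule R A) :
    Submodule.span R {g} * (Submodule.span R {h} * X) = X := by
  rw [← mul_assoc, Submodule.span_mul_span, Set.singleton_mul_singleton, hgh,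
    ← Submodule.one_eq_span, one_mul]

lemma IsSimpleSubcoalgebra.span_singleton_mul (hC : IsSimpleSubcoalgebra R A C)
    (hg : IsGroupLikeElem R g) : IsSimpleSubcoalgebra R A (Submodule.span R {g} * C) := by
  have cancel := span_singleton_mul_span_singleton_mul (R := R) hg.antipode_mul_cancel
  have cancel' := span_singleton_mul_span_singleton_mul (R := R) hg.mul_antipode_cancel
  refine ⟨(isSimpleSubcoalgebra_span_singleton hg).1.mul hC.1, fun h0 => hC.2.1 ?_,
    fun D hD hDs hD0 => ?_⟩
  · rw [← cancel C, h0, Submodule.mul_bot]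
  · have hDC : Submodule.span R {antipode R g} * D = C := by
      refine hC.2.2 _ ((mul_le_mul' le_rfl hD).trans (cancel C).le)
        ((isSimpleSubcoalgebra_span_singleton hg.antipode).1.mul hDs) fun h0 => hD0 ?_
      rw [← cancel' D, h0, Submodule.mul_bot]
    rw [← hDC, cancel']

lemma exists_dual_eq_one_of_isGroupLikeElem (hg : IsGroupLikeElem R g) :
    ∃ f : A →ₗ[R] R, f g = 1 ∧ ∀ h, IsGroupLikeElem R h → h ≠ g → f h = 0 := by
  let b := Module.Basis.extend (linearIndepOn_isGroupLikeElem (R := R) (A := A))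
  have hb {x : A} (hx : IsGroupLikeElem R x) :
      ∃ i, b i = x ∧ (i : A) = x :=
    ⟨⟨x, Module.Basis.subset_extend _ hx⟩, Module.Basis.extend_apply_self _ _, rfl⟩
  obtain ⟨i, hi, hi'⟩ := hb hg
  refine ⟨b.coord i, ?_, fun h hh hne => ?_⟩
  · rw [← hi, Module.Basis.coord_apply, b.repr_self, Finsupp.single_eq_same]
  · obtain ⟨j, hj, hj'⟩ := hb hh
    rw [← hj, Module.Basis.coord_apply, b.repr_self, Finsupp.single_eq_of_ne]
    rintro rfl
    exact hne (hj'.symm.trans hi')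

lemma IsSubcoalgebra.span_inf_eq_span_inter {X : Submodule R A} (hX : IsSubcoalgebra R A X)
    {S : Set A} (hS : ∀ g ∈ S, IsGroupLikeElem R g) :
    Submodule.span R S ⊓ X = Submodule.span R (S ∩ X) := by
  refine le_antisymm ?_ (Submodule.span_le.2 fun g hg => ⟨Submodule.subset_span hg.1, hg.2⟩)
  rintro x ⟨hx, hxX⟩
  obtain ⟨c, hcS, rfl⟩ := Submodule.mem_span_set.1 hx
  refine sum_mem fun g hg => Submodule.smul_mem _ _ (Submodule.subset_span ⟨hcS hg, ?_⟩)
  obtain ⟨f, hfg, hf⟩ := exists_dual_eq_one_of_isGroupLikeElem (hS g (hcS hg))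
  have hcontract : contractL f (comul (R := R) (c.sum fun m r => r • m)) = c g • g := by
    have hterm (h : A) (hh : h ∈ c.support) :
        contractL f (comul (R := R) (c h • h)) = c h • f h • h := by
      rw [map_smul, map_smul, (hS h (hcS hh)).comul_eq_tmul_self, contractL_tmul]
    rw [Finsupp.sum, map_sum, map_sum, Finset.sum_congr rfl hterm, Finset.sum_eq_single g]
    · rw [hfg, one_smul]
    · intro h hh hne
      rw [hf h (hS h (hcS hh)) hne, zero_smul, smul_zero]
    · exact fun h => absurd hg h
  exact (X.smul_mem_iff (Finsupp.mem_support_iff.1 hg)).1 (hcontract ▸ hX.contractL_mem hxX f)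

lemma IsGrouplikeSubgroup.toSubmodule_adjoin (hG : IsGrouplikeSubgroup R A G) :
    (Algebra.adjoin R G).toSubmodule = Submodule.span R G := by
  let N : Submonoid A :=
    { carrier := G
      one_mem' := hG.1
      mul_mem' := fun {a b} ha hb => hG.2.2.1 a ha b hb }
  rw [Algebra.adjoin_eq_span, show Submonoid.closure G = N from N.closure_eq]
  rfl

variable [FiniteDimensional R A]

lemma IsHaar.exists_le_of_le_sSup (hl : IsHaar l) (hC : IsSimpleSubcoalgebra R A C)
    {S : Set (Submodule R A)} (hS : ∀ X ∈ S, IsSubcoalgebra R A X) (h : C ≤ sSup S) :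
    ∃ X ∈ S, C ≤ X := by
  by_contra! hne
  refine hC.2.1 (hl.eq_bot_of_haarForm_eq_zero hC.1 fun x hx y hy => ?_)
  have hker : sSup S ≤ LinearMap.ker (haarForm l x) := sSup_le fun X hX y hy =>
    hl.haarForm_eq_zero_of_disjoint hC.1 (hS X hX)
      (by_contra fun hdisj => hne X hX (hC.le_of_not_disjoint (hS X hX) hdisj)) hx hy
  exact hker (h hy)

lemma IsHaar.mem_conjK_iff_mul_integral_eq (hl : IsHaar l) (hg : IsGroupLikeElem R g) :
    g ∈ conjK R A K Λ C ↔ ∀ c ∈ C, IsCocomm R A c → g * (c * Λ) = c * Λ := by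
  rw [← Submodule.span_singleton_le_iff_mem]
  constructor
  · intro hgC c hcC hc
    obtain ⟨D, hD, hgD⟩ :=
      hl.exists_le_of_le_sSup (isSimpleSubcoalgebra_span_singleton hg) (fun D hD => hD.1.1) hgC
    rw [hD.2 g (hgD (Submodule.mem_span_singleton_self g)) (isCocomm_of_isGroupLikeElem hg) c hcC
      hc, hg.counit_eq_one, one_smul]
  · refine fun hgC => le_sSup ⟨isSimpleSubcoalgebra_span_singleton hg, fun d hd _ c hcC hc => ?_⟩
    obtain ⟨a, rfl⟩ := Submodule.mem_span_singleton.1 hd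
    rw [smul_mul_assoc, hgC c hcC hc, map_smul, hg.counit_eq_one, smul_eq_mul, mul_one]

variable [CharZero R]

lemma IsHaar.span_singleton_mul_CKsub_eq (hl : IsHaar l) (hg : IsGroupLikeElem R g)
    (hK : IsHopfSubalgebra R A K) (hΛ : IsIdempotentIntegral R A K Λ)
    (hC : IsSimpleSubcoalgebra R A C) (hgC : ∀ c ∈ C, IsCocomm R A c → g * (c * Λ) = c * Λ) :
    Submodule.span R {g} * CKsub R A K C = CKsub R A K C := by
  obtain ⟨c, hcC, hc, hc0⟩ := hC.1.exists_isCocomm hC.2.1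
  have hcΛ : c * Λ ∈ C * K.toSubmodule := Submodule.mul_mem_mul hcC hΛ.1
  have hcΛ' : c * Λ ∈ Submodule.span R {g} * C * K.toSubmodule := by
    rw [← hgC c hcC hc, mul_assoc]
    exact Submodule.mul_mem_mul (Submodule.mem_span_singleton_self g) hcΛ
  rw [CKsub, ← mul_assoc]
  refine hl.mul_toSubmodule_eq hK (hC.span_singleton_mul hg) hC fun hdisj => hc0 ?_
  rw [← mul_one (counit (R := R) c), ← hΛ.2.1, ← Bialgebra.counit_mul,
    Submodule.disjoint_def.1 hdisj _ hcΛ' hcΛ, map_zero]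

variable [IsAlgClosed R]

lemma IsHaar.mul_integral_eq (hl : IsHaar l) (hg : IsGroupLikeElem R g)
    (hK : IsHopfSubalgebra R A K) (hΛ : IsIdempotentIntegral R A K Λ)
    (hC : IsSimpleSubcoalgebra R A C)
    (hgC : Submodule.span R {g} * CKsub R A K C = CKsub R A K C) {c : A} (hcC : c ∈ C)
    (hc : IsCocomm R A c) : g * (c * Λ) = c * Λ := by
  have hcΛ : c * Λ ∈ CKsub R A K C := Submodule.mul_mem_mul hcC hΛ.1
  have hgcΛ : g * (c * Λ) ∈ CKsub R A K C :=
    hgC ▸ Submodule.mul_mem_mul (Submodule.mem_span_singleton_self g) hcΛ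
  have hcΛc := hc.mul (hl.isCocomm_integral hK hΛ)
  refine sub_eq_zero.1 (hl.eq_zero_of_isCocomm_of_counit_eq_zero hK hΛ hC (sub_mem hgcΛ hcΛ)
    (((isCocomm_of_isGroupLikeElem hg).mul hcΛc).sub hcΛc) (fun a ha => ?_) ?_)
  · rw [sub_mul, mul_assoc, mul_assoc, (hΛ.2.2 a ha).2]
    simp only [mul_smul_comm, smul_sub]
  · rw [map_sub, Bialgebra.counit_mul, hg.counit_eq_one, one_mul, sub_self]

lemma IsHaar.mem_conjK_iff (hl : IsHaar l) (hg : IsGroupLikeElem R g)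
    (hK : IsHopfSubalgebra R A K) (hΛ : IsIdempotentIntegral R A K Λ)
    (hC : IsSimpleSubcoalgebra R A C) :
    g ∈ conjK R A K Λ C ↔ Submodule.span R {g} * CKsub R A K C = CKsub R A K C :=
  (hl.mem_conjK_iff_mul_integral_eq hg).trans
    ⟨hl.span_singleton_mul_CKsub_eq hg hK hΛ hC,
      fun hgC _ => hl.mul_integral_eq hg hK hΛ hC hgC⟩

theorem IsHaar.adjoin_inf_conjK (hl : IsHaar l) (hG : IsGrouplikeSubgroup R A G)
    (hK : IsHopfSubalgebra R A K) (hΛ : IsIdempotentIntegral R A K Λ)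
    (hC : IsSimpleSubcoalgebra R A C) :
    (Algebra.adjoin R G).toSubmodule ⊓ conjK R A K Λ C =
      Submodule.span R {g : A | g ∈ G ∧
        Submodule.span R {g} * CKsub R A K C = CKsub R A K C} := by
  have hconj : IsSubcoalgebra R A (conjK R A K Λ C) := isSubcoalgebra_sSup fun D hD => hD.1.1
  rw [hG.toSubmodule_adjoin, hconj.span_inf_eq_span_inter fun g hg => hG.isGroupLikeElem hg]
  congr 1
  ext g
  exact and_congr_right fun hg => hl.mem_conjK_iff (hG.isGroupLikeElem hg) hK hΛ hC

end GroupLike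

section CosetDecomposition

variable {R : Type} [Field R] {A : Type} [Ring A] [HopfAlgebra R A] {l : A →ₗ[R] R}
  {K : Subalgebra R A} {G : Set A} {g : A} {ι : Type} {rep : ι → Submodule R A}
  {V W C : Submodule R A}

variable (K) in
/-- The set `H/K` of right cosets `CK` of `K`, for `C` a simple subcoalgebra of `H`. -/
def rightCosets : Set (Submodule R A) :=
  CKsub R A K '' {C | IsSimpleSubcoalgebra R A C}

lemma isSubcoalgebra_of_mem_rightCosets (hK : IsHopfSubalgebra R A K) (hW : W ∈ rightCosets K) :
    IsSubcoalgebra R A W := by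
  obtain ⟨C, hC, rfl⟩ := hW
  exact hC.1.mul hK.1

lemma span_singleton_mul_CKsub_mem_rightCosets (hg : IsGroupLikeElem R g)
    (hC : IsSimpleSubcoalgebra R A C) :
    Submodule.span R {g} * CKsub R A K C ∈ rightCosets K :=
  ⟨_, hC.span_singleton_mul hg, by rw [CKsub, CKsub, mul_assoc]⟩

lemma mul_mem_CKsub {x a : A} (hx : x ∈ CKsub R A K C) (ha : a ∈ K) : x * a ∈ CKsub R A K C := by
  rw [CKsub, ← mul_toSubmodule_mul_toSubmodule]
  exact Submodule.mul_mem_mul hx ha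

lemma IsGrouplikeSubgroup.adjoin_mul_span_singleton_mul (hG : IsGrouplikeSubgroup R A G)
    (hg : g ∈ G) (X : Submodule R A) :
    (Algebra.adjoin R G).toSubmodule * (Submodule.span R {g} * X) =
      (Algebra.adjoin R G).toSubmodule * X := by
  have mul_le {h : A} (hh : h ∈ G) (Y : Submodule R A) :
      (Algebra.adjoin R G).toSubmodule * (Submodule.span R {h} * Y) ≤
        (Algebra.adjoin R G).toSubmodule * Y := by
    have hspan : Submodule.span R {h} ≤ (Algebra.adjoin R G).toSubmodule :=
      (Submodule.span_singleton_le_iff_mem _ _).2 (Algebra.subset_adjoin hh)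
    rw [← mul_assoc]
    refine mul_le_mul' ((mul_le_mul' le_rfl hspan).trans ?_) le_rfl
    exact (Algebra.adjoin R G).isIdempotentElem_toSubmodule.eq.le
  obtain ⟨g', hg', -, hg'g⟩ := hG.2.2.2 g hg
  refine le_antisymm (mul_le hg X) ?_
  conv_lhs => rw [← span_singleton_mul_span_singleton_mul hg'g X]
  exact mul_le hg' _

lemma IsDoubleCosetReps.eq_of_span_singleton_mul_eq (hG : IsGrouplikeSubgroup R A G)
    (hrep : IsDoubleCosetReps R A (Algebra.adjoin R G) K rep) {g h : A} (hg : g ∈ G) (hh : h ∈ G)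
    {i j : ι} (hij : Submodule.span R {g} * CKsub R A K (rep i) =
      Submodule.span R {h} * CKsub R A K (rep j)) : i = j := by
  refine hrep.2.1 i j ?_
  have hmul := congrArg ((Algebra.adjoin R G).toSubmodule * ·) hij
  simpa only [hG.adjoin_mul_span_singleton_mul hg, hG.adjoin_mul_span_singleton_mul hh, CKsub,
    ← mul_assoc] using hmul

variable [FiniteDimensional R A]

lemma IsHaar.eq_of_mem_rightCosets (hl : IsHaar l) (hK : IsHopfSubalgebra R A K)
    (hV : V ∈ rightCosets K) (hW : W ∈ rightCosets K) (h : ¬ Disjoint V W) : V = W := by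
  obtain ⟨C, hC, rfl⟩ := hV
  obtain ⟨D, hD, rfl⟩ := hW
  exact hl.mul_toSubmodule_eq hK hC hD h

lemma IsHaar.sSup_rightCosets (hl : IsHaar l) : sSup (rightCosets K) = ⊤ := by
  rw [eq_top_iff, ← hl.sSup_isSimpleSubcoalgebra]
  exact sSup_le fun C hC => (le_mul_toSubmodule K C).trans (le_sSup ⟨C, hC, rfl⟩)

lemma IsHaar.sSupIndep_rightCosets (hl : IsHaar l) (hK : IsHopfSubalgebra R A K) :
    sSupIndep (rightCosets K) := by
  intro W hW
  by_contra hdisj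
  have hcoalg : ∀ V ∈ rightCosets K \ {W}, IsSubcoalgebra R A V := fun V hV =>
    isSubcoalgebra_of_mem_rightCosets hK hV.1
  obtain ⟨D, hDle, hD⟩ :=
    ((isSubcoalgebra_of_mem_rightCosets hK hW).inf
      (isSubcoalgebra_sSup hcoalg)).exists_isSimpleSubcoalgebra_le
        fun h0 => hdisj (disjoint_iff.2 h0)
  obtain ⟨V, hV, hDV⟩ := hl.exists_le_of_le_sSup hD hcoalg (hDle.trans inf_le_right)
  exact hV.2 <| hl.eq_of_mem_rightCosets hK hV.1 hW fun hVW =>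
    hD.2.1 (disjoint_self.1 (hVW.mono hDV (hDle.trans inf_le_left)))

lemma IsHaar.isInternal_rightCosets [DecidableEq (rightCosets K)] (hl : IsHaar l)
    (hK : IsHopfSubalgebra R A K) :
    DirectSum.IsInternal fun W : rightCosets K => (W : Submodule R A) :=
  DirectSum.isInternal_submodule_of_iSupIndep_of_iSup_eq_top
    ((sSupIndep_iff _).1 (hl.sSupIndep_rightCosets hK))
    ((sSup_eq_iSup' _).symm.trans hl.sSup_rightCosets)

lemma IsHaar.exists_eq_span_singleton_mul_CKsub (hl : IsHaar l) (hG : IsGrouplikeSubgroup R A G)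
    (hK : IsHopfSubalgebra R A K) (hrep : IsDoubleCosetReps R A (Algebra.adjoin R G) K rep)
    (hW : W ∈ rightCosets K) :
    ∃ i, ∃ g ∈ G, W = Submodule.span R {g} * CKsub R A K (rep i) := by
  obtain ⟨C, hC, rfl⟩ := id hW
  obtain ⟨i, hi⟩ := hrep.2.2 C hC
  have mem_rightCosets {g : A} (hg : g ∈ G) :
      Submodule.span R {g} * CKsub R A K (rep i) ∈ rightCosets K :=
    span_singleton_mul_CKsub_mem_rightCosets (hG.isGroupLikeElem hg) (hrep.1 i)
  have hCsup : C ≤ sSup ((fun g => Submodule.span R {g} * CKsub R A K (rep i)) '' G) := by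
    rwa [mul_assoc, hG.toSubmodule_adjoin, Submodule.span_eq_iSup_of_singleton_spans,
      Submodule.iSup_mul, ← CKsub, iSup_congr fun g => Submodule.iSup_mul _ _,
      ← sSup_image] at hi
  obtain ⟨_, ⟨g, hg, rfl⟩, hCg⟩ := hl.exists_le_of_le_sSup hC
    (by rintro _ ⟨g, hg, rfl⟩; exact isSubcoalgebra_of_mem_rightCosets hK (mem_rightCosets hg))
    hCsup
  exact ⟨i, g, hg, hl.eq_of_mem_rightCosets hK hW (mem_rightCosets hg) fun hdisj =>
    hC.2.1 (disjoint_self.1 (hdisj.mono (le_mul_toSubmodule K C) hCg))⟩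

lemma IsHaar.eq_top_of_mul_mem (hl : IsHaar l) (hG : IsGrouplikeSubgroup R A G)
    (hK : IsHopfSubalgebra R A K) (hrep : IsDoubleCosetReps R A (Algebra.adjoin R G) K rep)
    {X : Submodule R A} (hX : ∀ i, ∀ g ∈ G, ∀ x ∈ CKsub R A K (rep i), g * x ∈ X) : X = ⊤ := by
  rw [eq_top_iff, ← hl.sSup_rightCosets (K := K)]
  refine sSup_le fun W hW w hw => ?_
  obtain ⟨i, g, hg, rfl⟩ := hl.exists_eq_span_singleton_mul_CKsub hG hK hrep hW
  obtain ⟨x, hx, rfl⟩ := Submodule.mem_span_singleton_mul.1 hw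
  exact hX i g hg x hx

end CosetDecomposition

section MackeyMap

variable {R : Type} [Field R] {A : Type} [Ring A] [HopfAlgebra R A]
  {L K : Subalgebra R A} {C : Submodule R A}
variable {M : Type v} [AddCommGroup M] [Module R M] [Module K M]

lemma ind_mk_mul_tmul (h : A) (a : K) (m : M) :
    (Submodule.Quotient.mk ((h * (a : A)) ⊗ₜ[R] m) : Ind R A K M) =
      Submodule.Quotient.mk (h ⊗ₜ[R] (a • m)) := by
  rw [Submodule.Quotient.eq]
  have hrel := (indRel R A K M).smul_mem h (Submodule.subset_span ⟨a, m, rfl⟩)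
  simpa [smul_sub, TensorProduct.smul_tmul'] using hrel

section Lift

variable {N : Type*} [AddCommGroup N] [Module R N] (B : A →ₗ[R] M →ₗ[R] N)
  (hB : ∀ (h : A) (a : K) (m : M), B (h * a) m = B h (a • m))

include hB in
lemma lift_smul_eq_zero_of_mem_indRel {z : A ⊗[R] M} (hz : z ∈ indRel R A K M) (h : A) :
    TensorProduct.lift B (h • z) = 0 := by
  induction hz using Submodule.span_induction generalizing h with
  | mem z hz =>
    obtain ⟨a, m, rfl⟩ := hz
    simp [smul_sub, TensorProduct.smul_tmul', hB]
  | zero => rw [smul_zero, map_zero]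
  | add y z _ _ hy hz => rw [smul_add, map_add, hy, hz, add_zero]
  | smul b z _ hz => rw [smul_smul, hz]

/-- The universal property of `H ⊗_K M`: the linear map induced by a `K`-balanced bilinear map on
`H × M`. -/
def indLift : Ind R A K M →ₗ[R] N :=
  ((indRel R A K M).restrictScalars R).liftQ (TensorProduct.lift B)
      (fun z hz => by simpa using lift_smul_eq_zero_of_mem_indRel B hB hz 1) ∘ₗ
    (Submodule.Quotient.restrictScalarsEquiv R (indRel R A K M)).symm.toLinearMap

lemma indLift_mk (h : A) (m : M) :
    indLift B hB (Submodule.Quotient.mk (h ⊗ₜ[R] m)) = B h m := rfl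

end Lift

variable (L K C M) in
/-- The linear map `L ⊗ (CK ⊗ M) → H ⊗_K M`, `l ⊗ (x ⊗ m) ↦ lx ⊗ m`, of which the component of the
Mackey map at `C` is the factorization through `L ⊗_{L ∩ ᶜK} ᶜM`. -/
def lcmToInd : LCM R A L K C M →ₗ[R] Ind R A K M :=
  (indRel R A K M).mkQ.restrictScalars R ∘ₗ
    (TensorProduct.lift (LinearMap.rTensorHom M ∘ₗ
      (LinearMap.mul R A).compl₁₂ L.val.toLinearMap (CKsub R A K C).subtype) :
        L ⊗[R] (CKsub R A K C ⊗[R] M) →ₗ[R] A ⊗[R] M)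

lemma lcmToInd_lcmk (a : L) (x : CKsub R A K C) (m : M) :
    lcmToInd L K C M (lcmk R A L K C M a (ckmk R A K M C x m)) =
      Submodule.Quotient.mk (((a : A) * (x : A)) ⊗ₜ[R] m) := rfl

lemma compRel_le_ker_lcmToInd (Λ : A) :
    compRel R A L K Λ C M ≤ LinearMap.ker (lcmToInd L K C M) := by
  refine Submodule.span_le.2 ?_
  rintro _ (⟨a, b, hb, -, x, m, hbx, rfl⟩ | ⟨a, x, b, m, hxb, rfl⟩) <;>
    rw [SetLike.mem_coe, LinearMap.mem_ker, map_sub, lcmToInd_lcmk, lcmToInd_lcmk, sub_eq_zero]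
  · rw [mul_assoc]
  · rw [← mul_assoc, ind_mk_mul_tmul]

variable (L K C M) in
/-- The class of `l ⊗ x ⊗ m` in `L ⊗_{L ∩ ᶜK} ᶜM`, as a bilinear map in `x` and `m`. -/
def compMk (Λ : A) (a : L) : CKsub R A K C →ₗ[R] M →ₗ[R] Comp R A L K Λ C M :=
  (TensorProduct.mk R (CKsub R A K C) M).compr₂
    ((compRel R A L K Λ C M).mkQ ∘ₗ TensorProduct.mk R L (CKsub R A K C ⊗[R] M) a)

lemma compMk_mul {Λ : A} (a : L) {b : A} (hb : b ∈ L) (hbC : b ∈ conjK R A K Λ C)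
    (x : CKsub R A K C) (m : M) (hbx : b * (x : A) ∈ CKsub R A K C) :
    compMk L K C M Λ ⟨a * b, mul_mem a.2 hb⟩ x m = compMk L K C M Λ a ⟨b * x, hbx⟩ m :=
  (Submodule.Quotient.eq _).2 (Submodule.subset_span (Or.inl ⟨a, b, hb, hbC, x, m, hbx, rfl⟩))

lemma compMk_smul {Λ : A} (a : L) (x : CKsub R A K C) (b : K) (m : M)
    (hxb : (x : A) * b ∈ CKsub R A K C) :
    compMk L K C M Λ a ⟨x * b, hxb⟩ m = compMk L K C M Λ a x (b • m) :=
  (Submodule.Quotient.eq _).2 (Submodule.subset_span (Or.inr ⟨a, x, b, m, hxb, rfl⟩))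

lemma IsGrouplikeSubgroup.span_val_preimage_eq_top {G : Set A} (hG : IsGrouplikeSubgroup R A G) :
    Submodule.span R (Subtype.val ⁻¹' G : Set (Algebra.adjoin R G)) = ⊤ := by
  refine Submodule.map_injective_of_injective
    (f := (Algebra.adjoin R G).val.toLinearMap) Subtype.val_injective ?_
  rw [Submodule.map_span, Submodule.map_top]
  have himage : (Algebra.adjoin R G).val.toLinearMap '' (Subtype.val ⁻¹' G) = G :=
    Subtype.image_preimage_coe _ _ |>.trans (Set.inter_eq_right.2 Algebra.subset_adjoin)
  rw [himage, ← hG.toSubmodule_adjoin]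
  exact (Submodule.range_subtype _).symm

lemma IsGrouplikeSubgroup.comp_hom_ext {G : Set A} (hG : IsGrouplikeSubgroup R A G) {Λ : A}
    {N : Type*} [AddCommGroup N] [Module R N]
    {f f' : Comp R A (Algebra.adjoin R G) K Λ C M →ₗ[R] N}
    (h : ∀ (g : A) (hg : g ∈ G) (x : CKsub R A K C) (m : M),
      f (compMk _ K C M Λ ⟨g, Algebra.subset_adjoin hg⟩ x m) =
        f' (compMk _ K C M Λ ⟨g, Algebra.subset_adjoin hg⟩ x m)) : f = f' :=
  Submodule.linearMap_qext _ <| TensorProduct.ext <|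
    LinearMap.ext_on hG.span_val_preimage_eq_top fun g hg => TensorProduct.ext' fun x m =>
      h g hg x m

variable {ι : Type} [DecidableEq ι]

variable (L K M) in
/-- The Mackey homomorphism `π_M : ⨁ L ⊗_{L ∩ ᶜK} ᶜM → H ⊗_K M`, `l ⊗ v ↦ lv`, the sum running over
a family `rep` of subcoalgebras `C`. -/
def mackeyMap (Λ : A) (rep : ι → Submodule R A) :
    (⨁ i, Comp R A L K Λ (rep i) M) →ₗ[R] Ind R A K M :=
  DirectSum.toModule R ι _ fun i =>
    (compRel R A L K Λ (rep i) M).liftQ (lcmToInd L K (rep i) M) (compRel_le_ker_lcmToInd Λ)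

lemma mackeyMap_lof_compMk (Λ : A) (rep : ι → Submodule R A) (i : ι) (a : L)
    (x : CKsub R A K (rep i)) (m : M) :
    mackeyMap L K M Λ rep (DirectSum.lof R ι (fun i => Comp R A L K Λ (rep i) M) i
        (compMk L K (rep i) M Λ a x m)) =
      Submodule.Quotient.mk (((a : A) * (x : A)) ⊗ₜ[R] m) := by
  rw [mackeyMap, DirectSum.toModule_lof]
  rfl

end MackeyMap

section MackeyInverse

lemma exists_linearMap_eq_of_isInternal {R V N κ : Type*} [Semiring R] [AddCommMonoid V]
    [Module R V] [AddCommMonoid N] [Module R N] [DecidableEq κ] {W : κ → Submodule R V}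
    (hW : DirectSum.IsInternal W) (φ : ∀ i, W i →ₗ[R] N) :
    ∃ f : V →ₗ[R] N, ∀ i, f ∘ₗ (W i).subtype = φ i := by
  let e := LinearEquiv.ofBijective (DirectSum.coeLinearMap W) hW
  refine ⟨DirectSum.toModule R κ N φ ∘ₗ e.symm.toLinearMap, fun i => LinearMap.ext fun w => ?_⟩
  have hsymm : e.symm w = DirectSum.lof R κ (fun i => W i) i w :=
    e.symm_apply_eq.2 (DirectSum.coeLinearMap_lof W i w).symm
  simp only [LinearMap.comp_apply, Submodule.subtype_apply, LinearEquiv.coe_coe, hsymm,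
    DirectSum.toModule_lof]

variable {R : Type} [Field R] {A : Type} [Ring A] [HopfAlgebra R A] [FiniteDimensional R A]
  {l : A →ₗ[R] R} {K : Subalgebra R A} {G : Set A} {Λ : A} {ι : Type} [DecidableEq ι]
  {rep : ι → Submodule R A} {M : Type v} [AddCommGroup M] [Module R M] [Module K M]

lemma IsHaar.mackeyMap_surjective (hl : IsHaar l) (hG : IsGrouplikeSubgroup R A G)
    (hK : IsHopfSubalgebra R A K)
    (hrep : IsDoubleCosetReps R A (Algebra.adjoin R G) K rep) :
    Function.Surjective (mackeyMap (Algebra.adjoin R G) K M Λ rep) := by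
  intro y
  obtain ⟨t, rfl⟩ := Submodule.Quotient.mk_surjective _ y
  rw [← LinearMap.mem_range]
  induction t with
  | zero => exact zero_mem _
  | add s t hs ht => exact add_mem hs ht
  | tmul a m =>
    have htop : (LinearMap.range (mackeyMap (Algebra.adjoin R G) K M Λ rep)).comap
        ((indRel R A K M).mkQ.restrictScalars R ∘ₗ (TensorProduct.mk R A M).flip m) = ⊤ :=
      hl.eq_top_of_mul_mem hG hK hrep fun i g hg x hx =>
        ⟨_, mackeyMap_lof_compMk Λ rep i ⟨g, Algebra.subset_adjoin hg⟩ ⟨x, hx⟩ m⟩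
    exact htop.symm.le (Submodule.mem_top (x := a))

variable [CharZero R] [IsAlgClosed R]

lemma IsHaar.compMk_eq_of_mul_eq (hl : IsHaar l) (hG : IsGrouplikeSubgroup R A G)
    (hK : IsHopfSubalgebra R A K) (hΛ : IsIdempotentIntegral R A K Λ) {C : Submodule R A}
    (hC : IsSimpleSubcoalgebra R A C) {g h : A} (hg : g ∈ G) (hh : h ∈ G)
    (hgh : Submodule.span R {g} * CKsub R A K C = Submodule.span R {h} * CKsub R A K C)
    {x y : CKsub R A K C} (hxy : g * (x : A) = h * (y : A)) (m : M) :
    compMk _ K C M Λ ⟨g, Algebra.subset_adjoin hg⟩ x m =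
      compMk _ K C M Λ ⟨h, Algebra.subset_adjoin hh⟩ y m := by
  obtain ⟨h', hh', hmul, hmul'⟩ := hG.2.2.2 h hh
  have hmem : h' * g ∈ G := hG.2.2.1 _ hh' _ hg
  have hfix : Submodule.span R {h' * g} * CKsub R A K C = CKsub R A K C := by
    rw [← Set.singleton_mul_singleton, ← Submodule.span_mul_span, mul_assoc, hgh,
      span_singleton_mul_span_singleton_mul hmul']
  have hstab : h' * g ∈ conjK R A K Λ C :=
    (hl.mem_conjK_iff (hG.isGroupLikeElem hmem) hK hΛ hC).2 hfix
  have hy : h' * g * (x : A) = y := by rw [mul_assoc, hxy, ← mul_assoc, hmul', one_mul]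
  have hg_eq : h * (h' * g) = g := by rw [← mul_assoc, hmul, one_mul]
  simpa only [hg_eq, hy] using
    compMk_mul (M := M) ⟨h, Algebra.subset_adjoin hh⟩ (Algebra.subset_adjoin hmem) hstab x m
      (hy.symm ▸ y.2)

variable (M) in
lemma IsHaar.exists_coset_inverse (hl : IsHaar l) (hG : IsGrouplikeSubgroup R A G)
    (hK : IsHopfSubalgebra R A K) (hΛ : IsIdempotentIntegral R A K Λ)
    (hrep : IsDoubleCosetReps R A (Algebra.adjoin R G) K rep) {W : Submodule R A}
    (hW : W ∈ rightCosets K) :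
    ∃ φ : W →ₗ[R] M →ₗ[R] ⨁ i, Comp R A (Algebra.adjoin R G) K Λ (rep i) M,
      ∀ (i : ι) (g : A) (hg : g ∈ G), W = Submodule.span R {g} * CKsub R A K (rep i) →
        ∀ (x : CKsub R A K (rep i)) (hx : g * (x : A) ∈ W) (m : M),
          φ ⟨g * x, hx⟩ m = DirectSum.lof R ι
            (fun i => Comp R A (Algebra.adjoin R G) K Λ (rep i) M) i
            (compMk _ K (rep i) M Λ ⟨g, Algebra.subset_adjoin hg⟩ x m) := by
  obtain ⟨i, h, hh, rfl⟩ := hl.exists_eq_span_singleton_mul_CKsub hG hK hrep hW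
  obtain ⟨h', -, hmul, hmul'⟩ := hG.2.2.2 h hh
  have hmem : ∀ w ∈ Submodule.span R {h} * CKsub R A K (rep i),
      LinearMap.mulLeft R h' w ∈ CKsub R A K (rep i) := fun w hw => by
    rw [← span_singleton_mul_span_singleton_mul hmul' (CKsub R A K (rep i))]
    exact Submodule.mul_mem_mul (Submodule.mem_span_singleton_self h') hw
  refine ⟨(compMk _ K (rep i) M Λ ⟨h, Algebra.subset_adjoin hh⟩).compr₂
    (DirectSum.lof R ι (fun i => Comp R A (Algebra.adjoin R G) K Λ (rep i) M) i) ∘ₗ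
      (LinearMap.mulLeft R h').restrict hmem, fun j g hg hhg x hx m => ?_⟩
  obtain rfl : i = j := hrep.eq_of_span_singleton_mul_eq hG hh hg hhg
  have hcancel : h * (h' * (g * (x : A))) = g * x := by rw [← mul_assoc, hmul, one_mul]
  exact congrArg (DirectSum.lof R ι (fun i => Comp R A (Algebra.adjoin R G) K Λ (rep i) M) i)
    (hl.compMk_eq_of_mul_eq (x := ⟨h' * (g * x), hmem _ hx⟩) hG hK hΛ (hrep.1 i) hh hg hhg
      hcancel m)

variable (M) in
lemma IsHaar.exists_balanced_inverse (hl : IsHaar l) (hG : IsGrouplikeSubgroup R A G)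
    (hK : IsHopfSubalgebra R A K) (hΛ : IsIdempotentIntegral R A K Λ)
    (hrep : IsDoubleCosetReps R A (Algebra.adjoin R G) K rep) :
    ∃ B : A →ₗ[R] M →ₗ[R] ⨁ i, Comp R A (Algebra.adjoin R G) K Λ (rep i) M,
      (∀ (h : A) (a : K) (m : M), B (h * a) m = B h (a • m)) ∧
      ∀ (i : ι) (g : A) (hg : g ∈ G) (x : CKsub R A K (rep i)) (m : M),
        B (g * x) m = DirectSum.lof R ι
          (fun i => Comp R A (Algebra.adjoin R G) K Λ (rep i) M) i
          (compMk _ K (rep i) M Λ ⟨g, Algebra.subset_adjoin hg⟩ x m) := by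
  classical
  choose φ hφ using fun W : rightCosets K => hl.exists_coset_inverse M hG hK hΛ hrep W.2
  obtain ⟨B, hB⟩ := exists_linearMap_eq_of_isInternal (hl.isInternal_rightCosets hK) φ
  have hBmul (i : ι) (g : A) (hg : g ∈ G) (x : CKsub R A K (rep i)) (m : M) :
      B (g * x) m = DirectSum.lof R ι
        (fun i => Comp R A (Algebra.adjoin R G) K Λ (rep i) M) i
        (compMk _ K (rep i) M Λ ⟨g, Algebra.subset_adjoin hg⟩ x m) := by
    have hgx : g * (x : A) ∈ Submodule.span R {g} * CKsub R A K (rep i) :=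
      Submodule.mul_mem_mul (Submodule.mem_span_singleton_self g) x.2
    let W : rightCosets K :=
      ⟨_, span_singleton_mul_CKsub_mem_rightCosets (hG.isGroupLikeElem hg) (hrep.1 i)⟩
    rw [← hφ W i g hg rfl x hgx m, ← hB W]
    rfl
  refine ⟨B, fun h a m => ?_, hBmul⟩
  have hbalanced : LinearMap.eqLocus (B.flip m ∘ₗ LinearMap.mulRight R (a : A))
      (B.flip (a • m)) = ⊤ :=
    hl.eq_top_of_mul_mem hG hK hrep fun i g hg x hx => by
      have hxa := mul_mem_CKsub hx a.2
      change B (g * x * a) m = B (g * x) (a • m)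
      rw [mul_assoc]
      refine (hBmul i g hg ⟨x * a, hxa⟩ m).trans ?_
      rw [compMk_smul _ ⟨x, hx⟩ a m hxa]
      exact (hBmul i g hg ⟨x, hx⟩ (a • m)).symm
  exact hbalanced.symm.le (Submodule.mem_top (x := h))

lemma IsHaar.mackeyMap_injective (hl : IsHaar l) (hG : IsGrouplikeSubgroup R A G)
    (hK : IsHopfSubalgebra R A K) (hΛ : IsIdempotentIntegral R A K Λ)
    (hrep : IsDoubleCosetReps R A (Algebra.adjoin R G) K rep) :
    Function.Injective (mackeyMap (Algebra.adjoin R G) K M Λ rep) := by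
  obtain ⟨B, hB, hBmul⟩ := hl.exists_balanced_inverse M hG hK hΛ hrep
  have hinv : indLift B hB ∘ₗ mackeyMap (Algebra.adjoin R G) K M Λ rep = LinearMap.id :=
    DirectSum.linearMap_ext R fun i => hG.comp_hom_ext fun g hg x m => by
      simp only [LinearMap.comp_apply, LinearMap.id_apply, mackeyMap_lof_compMk, indLift_mk,
        hBmul i g hg]
  exact Function.LeftInverse.injective (g := indLift B hB) (LinearMap.congr_fun hinv)

end MackeyInverse

theorem statement_0_general (G : Set H) (hG : IsGrouplikeSubgroup k H G)
    (K : Subalgebra k H) (hK : IsHopfSubalgebra k H K)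
    (Λ : H) (hΛ : IsIdempotentIntegral k H K Λ) :
    (∀ C : Submodule k H, IsSimpleSubcoalgebra k H C →
      (Algebra.adjoin k G).toSubmodule ⊓ conjK k H K Λ C =
        Submodule.span k {g : H | g ∈ G ∧
          Submodule.span k {g} * CKsub k H K C = CKsub k H K C}) ∧
    ∀ (M : Type v) [AddCommGroup M] [Module k M] [Module K M] [IsScalarTower k K M]
      (ι : Type) [DecidableEq ι] (rep : ι → Submodule k H),
      IsDoubleCosetReps k H (Algebra.adjoin k G) K rep →
        Function.Bijective (mackeyMap (Algebra.adjoin k G) K M Λ rep) := by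
  obtain ⟨l, hl⟩ := exists_isHaar k H
  exact ⟨fun C hC => hl.adjoin_inf_conjK hG hK hΛ hC, fun M _ _ _ _ ι _ rep hrep =>
    ⟨hl.mackeyMap_injective hG hK hΛ hrep, hl.mackeyMap_surjective hG hK hrep⟩⟩

/-- Theorem 2: let `K` be a Hopf subalgebra of `H` and `G` a
subgroup of the group `G(H)` of grouplike elements of `H`.  For every simple
subcoalgebra `C` of `H` the intersection `kG ∩ ᶜK` is the group algebra
`kG_C` of the subgroup `G_C = {g ∈ G | g·CK = CK}` of `G`, and for every
finite-dimensional `K`-module `M` the left-multiplication map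
`⊕_{C ∈ kG\H/K} kG ⊗_{kG_C} ᶜM → M↑_K^H↓_{kG}^H` is an isomorphism of
`kG`-modules; that is, `(kG, K)` is a Mackey pair of Hopf subalgebras
of `H`. -/
theorem statement_0 (G : Set H) (hG : IsGrouplikeSubgroup k H G)
    (K : Subalgebra k H) (hK : IsHopfSubalgebra k H K)
    (Λ : H) (hΛ : IsIdempotentIntegral k H K Λ) :
    (∀ C : Submodule k H, IsSimpleSubcoalgebra k H C →
      (Algebra.adjoin k G).toSubmodule ⊓ conjK k H K Λ C =
        Submodule.span k {g : H | g ∈ G ∧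
          Submodule.span k {g} * CKsub k H K C = CKsub k H K C}) ∧
    IsMackeyPair.{v} k H (Algebra.adjoin k G) K Λ :=
  have ⟨hstab, hmackey⟩ := statement_0_general.{v} k H G hG K hK Λ hΛ
  ⟨hstab, fun M _ _ _ _ _ ι _ rep hrep => ⟨_, hmackey M ι rep hrep, mackeyMap_lof_compMk Λ rep⟩⟩

end Statements

end

end MackeyPaper
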